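/- arXiv:math/0507520 — 4 statements merged into one kernel-verified Lean document; each statement's English description precedes it below -/
import Mathlib

section
/- Let X be a complex Banach space admitting a Schauder basis, let Ω ⊆ X be open, let Z₁, Z₂ be complex Banach spaces, and let τ : O^{Z₁} → O^{Z₂} be a sequentially continuous homomorphism of sheaves of germs of holomorphic functions over Ω. Then there exists a unique holomorphic map T : Ω → L(Z₁,Z₂) (into the space of bounded linear operators with the operator norm) such that for every open U ⊆ Ω, every f ∈ O(U,Z₁) and every x ∈ U one has (τ_U f)(x) = T(x)(f(x)). -/
/-!
The operator `T(x)` is forced on constants: `T(x) z = (τ z)(x)`. It is linear in `z`, and it is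
bounded because `τ` is sequentially continuous on constant functions. For fixed `z` the map
`x ↦ T(x) z` is holomorphic, so `T` is locally bounded by Banach–Steinhaus, and a locally bounded
strongly holomorphic operator function is holomorphic in the operator norm, since the Taylor
remainders of `x ↦ T(x) z` are quadratically small uniformly in `‖z‖ ≤ 1`
(`differentiableAt_of_strongly`).

Subtracting the constant `f(x₀)`, the identity `(τ f)(x₀) = T(x₀) f(x₀)` reduces to showing that
`(τ f)(x₀) = 0` whenever `f(x₀) = 0` (`map_eq_zero_of_apply_eq_zero`). If `f` has the form
`f(x) = A(x)(x - x₀)` with `A` holomorphic and bounded near `x₀`, the Schauder basis shows that `f`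
is the limit, uniformly on compact sets, of the finite sums `∑_{n < N} ξₙ(x - x₀) • A(x) eₙ`. By
`O`-linearity `τ` maps these to functions vanishing at `x₀`, and sequential continuity gives the
claim for `f` (`map_apply_sub_eq_zero`). A general `f` with `f(x₀) = 0` satisfies
`f(x) = (∫₀¹ Df(x₀ + s (x - x₀)) ds)(x - x₀)`; replacing the integral by its Riemann sums exhibits
`f` as a uniform limit, near `x₀`, of functions of that form
(`norm_radialSum_apply_sub_le`), and sequential continuity applies once more. The holomorphy of `Df`
itself is obtained from difference quotients and Cauchy's estimate.
-/

open Metric Filter Topology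

/-- A complex Banach space `X` admits a Schauder basis: a sequence `e n ∈ X` together with
continuous linear functionals `ξ n` such that every `x` is the norm-convergent sum
`∑ₙ ξ n x • e n` (partial sums in order). -/
def HasSchauderBasis (X : Type*) [NormedAddCommGroup X] [NormedSpace ℂ X] : Prop :=
  ∃ (e : ℕ → X) (ξ : ℕ → X →L[ℂ] ℂ), ∀ x : X,
    Tendsto (fun N => ∑ n ∈ Finset.range N, ξ n x • e n) atTop (𝓝 x)

/-- `τ` is a homomorphism of sheaves of germs of holomorphic functions `O^{Z₁} → O^{Z₂}`
over the open set `Ω`: for each open `U ⊆ Ω` it maps functions holomorphic on `U` to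
functions holomorphic on `U`, is additive, `O`-linear, and compatible with restrictions. -/
def IsSheafHomO {X Z₁ Z₂ : Type*} [NormedAddCommGroup X] [NormedSpace ℂ X]
    [NormedAddCommGroup Z₁] [NormedSpace ℂ Z₁] [NormedAddCommGroup Z₂] [NormedSpace ℂ Z₂]
    (Ω : Set X) (τ : Set X → (X → Z₁) → (X → Z₂)) : Prop :=
  (∀ U : Set X, U ⊆ Ω → IsOpen U → ∀ f : X → Z₁, DifferentiableOn ℂ f U →
      DifferentiableOn ℂ (τ U f) U) ∧
  (∀ U : Set X, U ⊆ Ω → IsOpen U → ∀ f g : X → Z₁, DifferentiableOn ℂ f U →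
      DifferentiableOn ℂ g U → ∀ x ∈ U, τ U (fun y => f y + g y) x = τ U f x + τ U g x) ∧
  (∀ U : Set X, U ⊆ Ω → IsOpen U → ∀ g : X → ℂ, DifferentiableOn ℂ g U →
      ∀ f : X → Z₁, DifferentiableOn ℂ f U →
      ∀ x ∈ U, τ U (fun y => g y • f y) x = g x • τ U f x) ∧
  (∀ U V : Set X, U ⊆ Ω → V ⊆ U → IsOpen U → IsOpen V → ∀ f : X → Z₁,
      DifferentiableOn ℂ f U → ∀ x ∈ V, τ V f x = τ U f x)

/-- Sequential continuity of a sheaf homomorphism `τ` over `Ω`: for each `x₀ ∈ Ω` there is an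
open ball `V` with `x₀ ∈ V ⊆ Ω` such that for every open ball `U` with `x₀ ∈ U ⊆ V`, whenever
holomorphic functions `fₙ` converge to a holomorphic `f` uniformly on compact subsets of `U`,
the images `τ_U fₙ` converge to `τ_U f` uniformly on compact subsets of `U`. -/
def IsSeqContinuousSheafHomO {X Z₁ Z₂ : Type*} [NormedAddCommGroup X] [NormedSpace ℂ X]
    [NormedAddCommGroup Z₁] [NormedSpace ℂ Z₁] [NormedAddCommGroup Z₂] [NormedSpace ℂ Z₂]
    (Ω : Set X) (τ : Set X → (X → Z₁) → (X → Z₂)) : Prop :=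
  ∀ x₀ ∈ Ω, ∃ (c : X) (ρ : ℝ), x₀ ∈ ball c ρ ∧ ball c ρ ⊆ Ω ∧
    ∀ (c' : X) (ρ' : ℝ), x₀ ∈ ball c' ρ' → ball c' ρ' ⊆ ball c ρ →
      ∀ (f : ℕ → X → Z₁) (g : X → Z₁),
        (∀ n, DifferentiableOn ℂ (f n) (ball c' ρ')) →
        DifferentiableOn ℂ g (ball c' ρ') →
        (∀ K : Set X, K ⊆ ball c' ρ' → IsCompact K → TendstoUniformlyOn f g atTop K) →
        (∀ K : Set X, K ⊆ ball c' ρ' → IsCompact K →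
          TendstoUniformlyOn (fun n => τ (ball c' ρ') (f n)) (τ (ball c' ρ') g) atTop K)

/-! ### Quantitative estimates for bounded holomorphic maps -/

section Estimates

variable {E F G : Type*} [NormedAddCommGroup E] [NormedSpace ℂ E]
  [NormedAddCommGroup F] [NormedSpace ℂ F] [NormedAddCommGroup G] [NormedSpace ℂ G]

/-- Cauchy's estimate for the Fréchet derivative at the centre of a ball. -/
lemma norm_fderiv_le_of_bound {f : E → F} {c : E} {R M : ℝ} (hR : 0 < R)
    (hd : DifferentiableOn ℂ f (ball c R)) (hM : ∀ x ∈ ball c R, ‖f x‖ ≤ M) :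
    ‖fderiv ℂ f c‖ ≤ 2 * M / R := by
  refine Complex.norm_fderiv_le_div_of_mapsTo_ball hd (fun x hx => ?_) hR
  rw [mem_closedBall, dist_eq_norm]
  have h1 := hM x hx
  have h2 := hM c (mem_ball_self hR)
  linarith [norm_sub_le (f x) (f c)]

/-- The first order Taylor remainder of a bounded holomorphic map is quadratically small, with a
constant depending only on the bound and on the radius. This is the Schwarz lemma of order two
applied to `f` minus its linear part. -/
lemma norm_taylor_remainder_le {f : E → F} {c z : E} {R M : ℝ}
    (hd : DifferentiableOn ℂ f (ball c R)) (hM : ∀ x ∈ ball c R, ‖f x‖ ≤ M)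
    (hz : z ∈ ball c R) :
    ‖f z - f c - fderiv ℂ f c (z - c)‖ ≤ 4 * M * (‖z - c‖ / R) ^ 2 := by
  have hR : 0 < R := nonempty_ball.mp ⟨_, hz⟩
  have hD := norm_fderiv_le_of_bound hR hd hM
  have hc : DifferentiableAt ℂ f c := hd.differentiableAt (ball_mem_nhds _ hR)
  have key := Complex.dist_le_mul_div_pow_of_mapsTo_ball_of_isLittleO (n := 1)
    (f := fun x => f x - fderiv ℂ f c (x - c)) (R₂ := 4 * M) (c := c) (z := z) (R₁ := R)
    (hd.sub (by fun_prop)) ?_ ?_ hz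
  · rw [dist_eq_norm, dist_eq_norm] at key
    simpa [sub_right_comm] using key
  · intro x hx
    rw [mem_closedBall, dist_eq_norm]
    have h1 := hM x hx
    have h2 := hM c (mem_ball_self hR)
    have h3 : ‖fderiv ℂ f c (x - c)‖ ≤ 2 * M := by
      refine ((fderiv ℂ f c).le_opNorm _).trans ?_
      have h4 : ‖x - c‖ ≤ R := (mem_ball_iff_norm.1 hx).le
      calc _ ≤ 2 * M / R * R := mul_le_mul hD h4 (norm_nonneg _) ((norm_nonneg _).trans hD)
        _ = 2 * M := by field_simp
    simp only [sub_self, map_zero, sub_zero]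
    calc _ ≤ ‖f x - fderiv ℂ f c (x - c)‖ + ‖f c‖ := norm_sub_le _ _
      _ ≤ ‖f x‖ + ‖fderiv ℂ f c (x - c)‖ + ‖f c‖ := by gcongr; exact norm_sub_le _ _
      _ ≤ _ := by linarith
  · have := hc.hasFDerivAt.isLittleO
    simp only [sub_self, map_zero, sub_zero, pow_one]
    refine Asymptotics.IsLittleO.norm_right ?_
    simpa [sub_right_comm] using this

/-- A strongly holomorphic operator function which is bounded near `c` is differentiable at `c` in
the operator norm. -/
lemma differentiableAt_of_strongly {T : E → F →L[ℂ] G} {c : E} {R M : ℝ} (hR : 0 < R)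
    (hd : ∀ z, DifferentiableOn ℂ (fun x => T x z) (ball c R))
    (hM : ∀ x ∈ ball c R, ‖T x‖ ≤ M) : DifferentiableAt ℂ T c := by
  have hb : ∀ z, ∀ x ∈ ball c R, ‖T x z‖ ≤ M * ‖z‖ := fun z x hx =>
    (T x).le_of_opNorm_le (hM x hx) z
  have hat : ∀ z, DifferentiableAt ℂ (fun x => T x z) c := fun z =>
    (hd z).differentiableAt (ball_mem_nhds _ hR)
  -- the derivative, as a map `z ↦ D(T(·)z)(c)`; its transpose is the derivative of `T`
  let D₀ : F →ₗ[ℂ] (E →L[ℂ] G) :=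
    { toFun := fun z => fderiv ℂ (fun x => T x z) c
      map_add' := fun z w => by
        simp only [map_add]
        exact fderiv_fun_add (hat z) (hat w)
      map_smul' := fun a z => by
        simp only [map_smul]
        exact fderiv_fun_const_smul (hat z) a }
  let D : F →L[ℂ] (E →L[ℂ] G) := D₀.mkContinuous (2 * M / R) fun z => by
    refine (norm_fderiv_le_of_bound hR (hd z) (hb z)).trans_eq ?_
    ring
  have hO : (fun x => T x - T c - D.flip (x - c)) =O[𝓝 c] fun x => ‖x - c‖ ^ 2 := by
    refine Asymptotics.IsBigO.of_bound (4 * M / R ^ 2) ?_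
    filter_upwards [ball_mem_nhds c hR] with x hx
    have hM0 : 0 ≤ M := (norm_nonneg _).trans (hM x hx)
    rw [Real.norm_of_nonneg (by positivity)]
    refine ContinuousLinearMap.opNorm_le_bound _ (by positivity) fun z => ?_
    refine (norm_taylor_remainder_le (hd z) (hb z) hx).trans_eq ?_
    rw [div_pow]
    ring
  have h0 := (hO.hasFDerivAt (𝕜 := ℂ) (by norm_num)).differentiableAt
  have h1 : DifferentiableAt ℂ (fun x => (T x - T c - D.flip (x - c)) + T c + D.flip (x - c)) c :=
    (h0.add_const _).add (by fun_prop)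
  simpa using h1

/-- A uniform limit of holomorphic maps on a ball of a normed space is differentiable at the centre:
by Cauchy's estimate the derivatives converge uniformly on the ball of half the radius. -/
lemma differentiableAt_of_uniform_limit [CompleteSpace F] {f : ℕ → E → F} {g : E → F} {c : E}
    {R : ℝ} (hR : 0 < R) (hd : ∀ n, DifferentiableOn ℂ (f n) (ball c R))
    (hfg : TendstoUniformlyOn f g atTop (ball c R)) : DifferentiableAt ℂ g c := by
  have hsub : ∀ x ∈ ball c (R / 2), ball x (R / 2) ⊆ ball c R := fun x hx =>
    ball_subset_ball' (by rw [mem_ball] at hx; linarith)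
  have hat : ∀ n, ∀ x ∈ ball c (R / 2), DifferentiableAt ℂ (f n) x := fun n x hx =>
    (hd n).differentiableAt (isOpen_ball.mem_nhds (ball_subset_ball (by linarith) hx))
  have hC : UniformCauchySeqOn (fun n => fderiv ℂ (f n)) atTop (ball c (R / 2)) := by
    rw [Metric.uniformCauchySeqOn_iff]
    intro ε hε
    obtain ⟨N, hN⟩ := Metric.uniformCauchySeqOn_iff.1 hfg.uniformCauchySeqOn (ε * R / 8)
      (by positivity)
    refine ⟨N, fun m hm n hn x hx => ?_⟩
    rw [dist_eq_norm, ← fderiv_sub (hat m x hx) (hat n x hx)]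
    refine (norm_fderiv_le_of_bound (M := ε * R / 8) (half_pos hR)
      (((hd m).sub (hd n)).mono (hsub x hx)) fun y hy => ?_).trans_lt ?_
    · have := hN m hm n hn y (hsub x hx hy)
      rw [dist_eq_norm] at this
      exact this.le
    · field_simp
      norm_num
  have hlim : ∀ x, ∃ A : E →L[ℂ] F, x ∈ ball c (R / 2) →
      Tendsto (fun n => fderiv ℂ (f n) x) atTop (𝓝 A) := fun x => by
    by_cases hx : x ∈ ball c (R / 2)
    · obtain ⟨A, hA⟩ := cauchySeq_tendsto_of_complete (hC.cauchySeq hx)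
      exact ⟨A, fun _ => hA⟩
    · exact ⟨0, fun h => absurd h hx⟩
  choose g' hg' using hlim
  refine (hasFDerivAt_of_tendstoUniformlyOn isOpen_ball
    (hC.tendstoUniformlyOn_of_tendsto fun x hx => hg' x hx)
    (fun n x hx => (hat n x hx).hasFDerivAt) (fun x hx => ?_)
    (mem_ball_self (half_pos hR))).differentiableAt
  exact hfg.tendsto_at (ball_subset_ball (by linarith) hx)

/-- Directional derivatives of a bounded holomorphic map are holomorphic: they are uniform limits
of difference quotients. -/
lemma differentiableAt_fderiv_apply [CompleteSpace F] {f : E → F} {c : E} {R M : ℝ} (hR : 0 < R)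
    (hd : DifferentiableOn ℂ f (ball c R)) (hM : ∀ x ∈ ball c R, ‖f x‖ ≤ M) (v : E) :
    DifferentiableAt ℂ (fun x => fderiv ℂ f x v) c := by
  have hM0 : 0 ≤ M := (norm_nonneg _).trans (hM c (mem_ball_self hR))
  -- the steps `t n → 0⁺` are so small that `x + t n • v` stays in the big ball
  obtain ⟨a, ha, hav⟩ : ∃ a : ℝ, 0 < a ∧ a * ‖v‖ < R / 2 := by
    refine ⟨R / 2 / (‖v‖ + 1), by positivity, ?_⟩
    rw [div_mul_eq_mul_div, div_lt_iff₀ (by positivity)]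
    nlinarith [norm_nonneg v]
  let t : ℕ → ℝ := fun n => a / (n + 1)
  have ht : ∀ n, 0 < t n := fun n => by positivity
  have hta : ∀ n, t n ≤ a := fun n => div_le_self ha.le (by simp)
  have htv : ∀ n, ‖((t n : ℂ)) • v‖ < R / 2 := fun n => by
    rw [norm_smul, Complex.norm_real, Real.norm_of_nonneg (ht n).le]
    exact (mul_le_mul_of_nonneg_right (hta n) (norm_nonneg _)).trans_lt hav
  have hlim : Tendsto t atTop (𝓝 0) := by
    have := (tendsto_one_div_add_atTop_nhds_zero_nat (𝕜 := ℝ)).const_mul a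
    simpa [t, div_eq_mul_inv] using this
  have hadd : ∀ n, ∀ x ∈ ball c (R / 2), x + (t n : ℂ) • v ∈ ball c R := fun n x hx => by
    rw [mem_ball_iff_norm] at hx ⊢
    calc _ = ‖(x - c) + (t n : ℂ) • v‖ := by congr 1; abel
      _ ≤ _ := norm_add_le _ _
      _ < R := by linarith [htv n]
  refine differentiableAt_of_uniform_limit (R := R / 2) (half_pos hR)
    (f := fun n x => ((t n : ℂ))⁻¹ • (f (x + (t n : ℂ) • v) - f x)) (fun n => ?_) ?_
  · refine DifferentiableOn.const_smul (DifferentiableOn.sub ?_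
      (hd.mono (ball_subset_ball (by linarith)))) _
    exact hd.comp (by fun_prop) (hadd n)
  · rw [Metric.tendstoUniformlyOn_iff]
    intro ε hε
    have h2 : Tendsto (fun n => t n * (16 * M * ‖v‖ ^ 2 / R ^ 2)) atTop (𝓝 0) := by
      simpa using hlim.mul_const (16 * M * ‖v‖ ^ 2 / R ^ 2)
    filter_upwards [h2.eventually (gt_mem_nhds hε)] with n hn x hx
    refine lt_of_le_of_lt ?_ hn
    have hsub : ball x (R / 2) ⊆ ball c R :=
      ball_subset_ball' (by rw [mem_ball] at hx; linarith)
    have h3 := norm_taylor_remainder_le (z := x + (t n : ℂ) • v) (hd.mono hsub)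
      (fun y hy => hM y (hsub hy)) (by rw [mem_ball_iff_norm]; simpa using htv n)
    have h4 : (t n : ℂ) ≠ 0 := by exact_mod_cast (ht n).ne'
    have h5 : ((t n : ℂ))⁻¹ • (f (x + (t n : ℂ) • v) - f x) - fderiv ℂ f x v
        = ((t n : ℂ))⁻¹ • (f (x + (t n : ℂ) • v) - f x - fderiv ℂ f x (x + (t n : ℂ) • v - x)) := by
      rw [add_sub_cancel_left, map_smul, smul_sub _ (_ - _), smul_smul, inv_mul_cancel₀ h4, one_smul]
    rw [dist_comm, dist_eq_norm, h5, norm_smul, norm_inv, Complex.norm_real,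
      Real.norm_of_nonneg (ht n).le]
    rw [add_sub_cancel_left] at h3
    rw [add_sub_cancel_left]
    calc _ ≤ (t n)⁻¹ * (4 * M * (‖(t n : ℂ) • v‖ / (R / 2)) ^ 2) :=
          mul_le_mul_of_nonneg_left h3 (inv_nonneg.2 (ht n).le)
      _ = _ := by
        rw [norm_smul, Complex.norm_real, Real.norm_of_nonneg (ht n).le]
        have := (ht n).ne'
        field_simp
        ring

end Estimates

/-! ### Partial sums of a Schauder basis -/

section Basis

variable {X : Type*} [NormedAddCommGroup X] [NormedSpace ℂ X]

/-- The partial sum operators of a Schauder basis are uniformly bounded by Banach–Steinhaus, hence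
they converge to the identity uniformly on compact sets. -/
lemma tendstoUniformlyOn_partialSum [CompleteSpace X] {e : ℕ → X} {ξ : ℕ → X →L[ℂ] ℂ}
    (h : ∀ x : X, Tendsto (fun N => ∑ n ∈ Finset.range N, ξ n x • e n) atTop (𝓝 x))
    {K : Set X} (hK : IsCompact K) :
    TendstoUniformlyOn (fun N x => ∑ n ∈ Finset.range N, ξ n x • e n) (fun x => x) atTop K := by
  let P : ℕ → X →L[ℂ] X := fun N => ∑ n ∈ Finset.range N, (ξ n).smulRight (e n)
  have hP : ∀ N x, P N x = ∑ n ∈ Finset.range N, ξ n x • e n := fun N x => by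
    simp [P]
  obtain ⟨C, hC⟩ := banach_steinhaus (g := P) fun x => by
    obtain ⟨C, hC⟩ := (h x).norm.bddAbove_range
    exact ⟨C, fun N => by rw [hP]; exact hC ⟨N, rfl⟩⟩
  have hC0 : 0 ≤ C := (norm_nonneg _).trans (hC 0)
  rw [Metric.tendstoUniformlyOn_iff]
  intro ε hε
  set δ : ℝ := ε / (2 * (C + 2)) with hδ
  have hδ0 : 0 < δ := by positivity
  -- a finite `δ`-net of `K` reduces uniform convergence to pointwise convergence
  obtain ⟨t, -, htf, htK⟩ := hK.finite_cover_balls hδ0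
  have hev : ∀ᶠ N in atTop, ∀ y ∈ t, dist (∑ n ∈ Finset.range N, ξ n y • e n) y < ε / 2 :=
    htf.eventually_all.2 fun y _ => (h y).eventually (ball_mem_nhds y (half_pos hε))
  filter_upwards [hev] with N hN x hx
  obtain ⟨y, hy, hxy⟩ := Set.mem_iUnion₂.1 (htK hx)
  have h1 := hN y hy
  rw [mem_ball_iff_norm] at hxy
  rw [← hP, dist_eq_norm] at h1
  rw [← hP, dist_comm, dist_eq_norm]
  have h2 : ‖P N (x - y)‖ ≤ C * δ :=
    ((P N).le_of_opNorm_le (hC N) _).trans (by gcongr)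
  have h3 : P N x - x = P N (x - y) + (P N y - y) - (x - y) := by
    rw [map_sub]; abel
  have h4 : (C + 2) * δ = ε / 2 := by rw [hδ]; field_simp
  calc _ ≤ ‖P N (x - y)‖ + ‖P N y - y‖ + ‖x - y‖ := by
        rw [h3]
        exact (norm_sub_le _ _).trans (by gcongr; exact norm_add_le _ _)
    _ < ε := by nlinarith

end Basis

/-! ### Radial Riemann sums -/

section Riemann

variable {E F : Type*} [NormedAddCommGroup E] [NormedSpace ℂ E]
  [NormedAddCommGroup F] [NormedSpace ℂ F]

/-- The left Riemann sum with `m + 1` steps of `∫₀¹ Df(c + s (x - c)) ds`, as a linear operator. -/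
noncomputable def radialSum (f : E → F) (c : E) (m : ℕ) (x : E) : E →L[ℂ] F :=
  ((m + 1 : ℕ) : ℂ)⁻¹ • ∑ j ∈ Finset.range (m + 1),
    fderiv ℂ f (c + ((j : ℂ) * ((m + 1 : ℕ) : ℂ)⁻¹) • (x - c))

lemma radial_mem_ball {c x : E} {r : ℝ} (hx : x ∈ ball c r) {m j : ℕ} (hj : j ≤ m + 1) :
    c + ((j : ℂ) * ((m + 1 : ℕ) : ℂ)⁻¹) • (x - c) ∈ ball c r := by
  rw [mem_ball_iff_norm] at hx ⊢
  rw [add_sub_cancel_left, norm_smul, norm_mul, norm_inv, Complex.norm_natCast,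
    Complex.norm_natCast]
  refine lt_of_le_of_lt (mul_le_of_le_one_left (norm_nonneg _) ?_) hx
  rw [← div_eq_mul_inv]
  exact div_le_one_of_le₀ (by exact_mod_cast hj) (by positivity)

/-- The radial Riemann sums recover the increments of a bounded holomorphic map, uniformly on the
ball of half the radius: each step contributes a quadratic Taylor remainder. -/
lemma norm_radialSum_apply_sub_le {f : E → F} {c x : E} {R M : ℝ}
    (hd : DifferentiableOn ℂ f (ball c R)) (hM : ∀ y ∈ ball c R, ‖f y‖ ≤ M)
    (hx : x ∈ ball c (R / 2)) (m : ℕ) :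
    ‖f x - f c - radialSum f c m x (x - c)‖ ≤ 4 * M / (m + 1) := by
  have hR2 : 0 < R / 2 := nonempty_ball.mp ⟨_, hx⟩
  have hM0 : 0 ≤ M := (norm_nonneg _).trans (hM c (mem_ball_self (by linarith)))
  set k : ℂ := ((m + 1 : ℕ) : ℂ)⁻¹ with hk
  have hk0 : ((m + 1 : ℕ) : ℂ) ≠ 0 := by exact_mod_cast m.succ_ne_zero
  have hkn : ‖k‖ = ((m : ℝ) + 1)⁻¹ := by
    rw [hk, norm_inv, Complex.norm_natCast]; push_cast; rfl
  set y : ℕ → E := fun j => c + ((j : ℂ) * k) • (x - c) with hy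
  have hstep : ∀ j, y (j + 1) - y j = k • (x - c) := fun j => by
    simp only [hy, add_sub_add_left_eq_sub, ← sub_smul]
    congr 1; push_cast; ring
  have htel : f x - f c = ∑ j ∈ Finset.range (m + 1), (f (y (j + 1)) - f (y j)) := by
    rw [Finset.sum_range_sub (fun j => f (y j))]
    simp only [hy, Nat.cast_zero, zero_mul, zero_smul, add_zero]
    rw [hk, mul_inv_cancel₀ hk0, one_smul, add_sub_cancel]
  have hsum : f x - f c - radialSum f c m x (x - c) = ∑ j ∈ Finset.range (m + 1),
      (f (y (j + 1)) - f (y j) - fderiv ℂ f (y j) (y (j + 1) - y j)) := by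
    simp only [hstep, map_smul]
    rw [htel, Finset.sum_sub_distrib (f := fun j => f (y (j + 1)) - f (y j)), ← Finset.smul_sum]
    simp [radialSum, hk, hy]
  rw [hsum]
  have hxn := mem_ball_iff_norm.1 hx
  have hle1 : ((m : ℝ) + 1)⁻¹ ≤ 1 := inv_le_one_of_one_le₀ (by simp)
  have hb : ∀ j ∈ Finset.range (m + 1),
      ‖f (y (j + 1)) - f (y j) - fderiv ℂ f (y j) (y (j + 1) - y j)‖
        ≤ 4 * M * (((m : ℝ) + 1)⁻¹) ^ 2 := by
    intro j hj
    have hyj : y j ∈ ball c (R / 2) := radial_mem_ball hx (Finset.mem_range.1 hj).le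
    have hsub : ball (y j) (R / 2) ⊆ ball c R :=
      ball_subset_ball' (by rw [mem_ball] at hyj; linarith)
    have hn : ‖y (j + 1) - y j‖ ≤ ((m : ℝ) + 1)⁻¹ * (R / 2) := by
      rw [hstep, norm_smul, hkn]
      gcongr
    have hlt : ‖y (j + 1) - y j‖ < R / 2 := by
      rw [hstep, norm_smul, hkn]
      exact lt_of_le_of_lt (mul_le_of_le_one_left (norm_nonneg _) hle1) hxn
    refine (norm_taylor_remainder_le (hd.mono hsub) (fun z hz => hM z (hsub hz))
      (mem_ball_iff_norm.2 hlt)).trans ?_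
    gcongr
    rwa [div_le_iff₀ hR2]
  refine (norm_sum_le_of_le _ hb).trans_eq ?_
  rw [Finset.sum_const, Finset.card_range, nsmul_eq_mul]
  push_cast
  field_simp

end Riemann

/-! ### Sheaf homomorphisms -/

section Sheaf

variable {X Z₁ Z₂ : Type*} [NormedAddCommGroup X] [NormedSpace ℂ X]
  [NormedAddCommGroup Z₁] [NormedSpace ℂ Z₁] [NormedAddCommGroup Z₂] [NormedSpace ℂ Z₂]
  {Ω : Set X} {τ : Set X → (X → Z₁) → (X → Z₂)}

lemma IsSheafHomO.map_zero (hτ : IsSheafHomO Ω τ) {U : Set X} (hU : U ⊆ Ω) (hUo : IsOpen U)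
    {x : X} (hx : x ∈ U) : τ U (fun _ => 0) x = 0 := by
  have := hτ.2.2.1 U hU hUo (fun _ => 0) (differentiableOn_const _) (fun _ => 0)
    (differentiableOn_const _) x hx
  simpa using this

/-- A finite combination `∑ gₙ • fₙ` whose coefficients vanish at `x` is mapped to a function
vanishing at `x`. -/
lemma IsSheafHomO.map_sum_smul_eq_zero (hτ : IsSheafHomO Ω τ) {U : Set X} (hU : U ⊆ Ω)
    (hUo : IsOpen U) {g : ℕ → X → ℂ} {f : ℕ → X → Z₁} (hg : ∀ n, DifferentiableOn ℂ (g n) U)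
    (hf : ∀ n, DifferentiableOn ℂ (f n) U) {x : X} (hx : x ∈ U) (h0 : ∀ n, g n x = 0) (N : ℕ) :
    τ U (fun y => ∑ n ∈ Finset.range N, g n y • f n y) x = 0 := by
  induction N with
  | zero => simpa using hτ.map_zero hU hUo hx
  | succ N ih =>
    simp only [Finset.sum_range_succ]
    rw [hτ.2.1 U hU hUo _ _ (DifferentiableOn.fun_sum fun n _ => (hg n).fun_smul (hf n))
      ((hg N).fun_smul (hf N)) x hx, ih, hτ.2.2.1 U hU hUo _ (hg N) _ (hf N) x hx, h0 N]
    simp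

/-- `τ` kills at `x₀` every function of the form `x ↦ A(x)(x - x₀)`: such a function is the limit
of the combinations `∑ ξₙ(x - x₀) • A(x) eₙ`, whose coefficients vanish at `x₀`. -/
lemma map_apply_sub_eq_zero [CompleteSpace X] (hX : HasSchauderBasis X) (hτ : IsSheafHomO Ω τ)
    {x₀ : X} {r : ℝ} (hr : 0 < r) (hW : ball x₀ r ⊆ Ω)
    (hcont : ∀ (f : ℕ → X → Z₁) (g : X → Z₁), (∀ n, DifferentiableOn ℂ (f n) (ball x₀ r)) →
      DifferentiableOn ℂ g (ball x₀ r) →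
      (∀ K : Set X, K ⊆ ball x₀ r → IsCompact K → TendstoUniformlyOn f g atTop K) →
      Tendsto (fun n => τ (ball x₀ r) (f n) x₀) atTop (𝓝 (τ (ball x₀ r) g x₀)))
    {A : X → X →L[ℂ] Z₁} {L : ℝ} (hA : ∀ v, DifferentiableOn ℂ (fun x => A x v) (ball x₀ r))
    (hg : DifferentiableOn ℂ (fun x => A x (x - x₀)) (ball x₀ r))
    (hL : ∀ x ∈ ball x₀ r, ‖A x‖ ≤ L) :
    τ (ball x₀ r) (fun x => A x (x - x₀)) x₀ = 0 := by
  obtain ⟨e, ξ, he⟩ := hX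
  have hL0 : 0 ≤ L := (norm_nonneg _).trans (hL x₀ (mem_ball_self hr))
  have hξ : ∀ n, DifferentiableOn ℂ (fun x => ξ n (x - x₀)) (ball x₀ r) := fun n => by fun_prop
  have h := hcont (fun N x => ∑ n ∈ Finset.range N, ξ n (x - x₀) • A x (e n))
    (fun x => A x (x - x₀))
    (fun N => DifferentiableOn.fun_sum fun n _ => (hξ n).smul (hA (e n))) hg ?_
  · refine tendsto_nhds_unique h ?_
    simp only [hτ.map_sum_smul_eq_zero hW isOpen_ball hξ (fun n => hA (e n)) (mem_ball_self hr)
      (fun n => by simp)]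
    exact tendsto_const_nhds
  · intro K hK hKc
    have hu := tendstoUniformlyOn_partialSum he (hKc.image (continuous_id.sub continuous_const
      : Continuous fun x => x - x₀))
    rw [Metric.tendstoUniformlyOn_iff] at hu ⊢
    intro ε hε
    filter_upwards [hu (ε / (L + 1)) (by positivity)] with N hN x hx
    have h1 := hN (x - x₀) ⟨x, hx, rfl⟩
    rw [dist_eq_norm] at h1 ⊢
    have h2 : A x (x - x₀) - ∑ n ∈ Finset.range N, ξ n (x - x₀) • A x (e n)
        = A x (x - x₀ - ∑ n ∈ Finset.range N, ξ n (x - x₀) • e n) := by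
      simp only [map_sub, map_sum, map_smul]
    rw [h2]
    refine ((A x).le_of_opNorm_le (hL x (hK hx)) _).trans_lt ?_
    rw [lt_div_iff₀ (by positivity)] at h1
    nlinarith [norm_nonneg (x - x₀ - ∑ n ∈ Finset.range N, ξ n (x - x₀) • e n)]

/-- The value of `τ f` at a zero of `f` is zero. Near `x₀` the function `f` is the uniform limit of
`x ↦ A_m(x)(x - x₀)`, where `A_m` are the radial Riemann sums of the derivative of `f`. -/
lemma map_eq_zero_of_apply_eq_zero [CompleteSpace X] [CompleteSpace Z₁] (hX : HasSchauderBasis X)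
    (hτ : IsSheafHomO Ω τ) (hc : IsSeqContinuousSheafHomO Ω τ)
    {U : Set X} (hU : U ⊆ Ω) (hUo : IsOpen U) {f : X → Z₁} (hf : DifferentiableOn ℂ f U)
    {x₀ : X} (hx₀ : x₀ ∈ U) (h0 : f x₀ = 0) : τ U f x₀ = 0 := by
  obtain ⟨c, ρ, hxc, hcΩ, hseq⟩ := hc x₀ (hU hx₀)
  have hfb : ∀ᶠ x in 𝓝 x₀, ‖f x‖ < 1 := by
    have : Tendsto (fun x => ‖f x‖) (𝓝 x₀) (𝓝 0) := by
      simpa [h0] using (hf.continuousOn.continuousAt (hUo.mem_nhds hx₀)).norm.tendsto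
    exact this.eventually (gt_mem_nhds one_pos)
  obtain ⟨R, hR, hRs⟩ := Metric.eventually_nhds_iff_ball.1
    (hfb.and ((isOpen_ball.eventually_mem hxc).and (hUo.eventually_mem hx₀)))
  have hd : DifferentiableOn ℂ f (ball x₀ R) := hf.mono fun x hx => (hRs x hx).2.2
  have hM : ∀ x ∈ ball x₀ R, ‖f x‖ ≤ 1 := fun x hx => (hRs x hx).1.le
  have hr : 0 < R / 2 := half_pos hR
  have hWR : ball x₀ (R / 2) ⊆ ball x₀ R := ball_subset_ball (by linarith)
  have hWU : ball x₀ (R / 2) ⊆ U := fun x hx => (hRs x (hWR hx)).2.2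
  have hmem := mem_ball_self (x := x₀) hr
  have hcont : ∀ (f : ℕ → X → Z₁) (g : X → Z₁),
      (∀ n, DifferentiableOn ℂ (f n) (ball x₀ (R / 2))) →
      DifferentiableOn ℂ g (ball x₀ (R / 2)) →
      (∀ K : Set X, K ⊆ ball x₀ (R / 2) → IsCompact K → TendstoUniformlyOn f g atTop K) →
      Tendsto (fun n => τ (ball x₀ (R / 2)) (f n) x₀) atTop
        (𝓝 (τ (ball x₀ (R / 2)) g x₀)) := fun f g hf hg hfg =>
    (hseq x₀ (R / 2) hmem (fun x hx => (hRs x (hWR hx)).2.1) f g hf hg hfg {x₀}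
      (by simpa using hr) isCompact_singleton).tendsto_at rfl
  have hsub : ∀ x ∈ ball x₀ (R / 2), ball x (R / 2) ⊆ ball x₀ R := fun x hx =>
    ball_subset_ball' (by rw [mem_ball] at hx; linarith)
  have hDb : ∀ x ∈ ball x₀ (R / 2), ‖fderiv ℂ f x‖ ≤ 2 * 1 / (R / 2) := fun x hx =>
    norm_fderiv_le_of_bound hr (hd.mono (hsub x hx)) fun y hy => hM y (hsub x hx hy)
  have hDd : DifferentiableOn ℂ (fderiv ℂ f) (ball x₀ (R / 2)) := fun x hx => by
    obtain ⟨s, hs, hsx⟩ := Metric.isOpen_iff.1 isOpen_ball x hx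
    refine (differentiableAt_of_strongly hs (fun v y hy => ?_)
      fun y hy => hDb y (hsx hy)).differentiableWithinAt
    exact (differentiableAt_fderiv_apply hr (hd.mono (hsub y (hsx hy)))
      (fun z hz => hM z (hsub y (hsx hy) hz)) v).differentiableWithinAt
  have hSd : ∀ m, DifferentiableOn ℂ (radialSum f x₀ m) (ball x₀ (R / 2)) := fun m => by
    refine DifferentiableOn.fun_const_smul (DifferentiableOn.fun_sum fun j hj => ?_) _
    exact hDd.comp (by fun_prop) fun x hx => radial_mem_ball hx (Finset.mem_range.1 hj).le
  have hSb : ∀ m, ∀ x ∈ ball x₀ (R / 2), ‖radialSum f x₀ m x‖ ≤ 2 * 1 / (R / 2) := by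
    intro m x hx
    rw [radialSum, norm_smul, norm_inv, Complex.norm_natCast, inv_mul_le_iff₀ (by positivity)]
    refine (norm_sum_le_of_le _ fun j hj =>
      hDb _ (radial_mem_ball hx (Finset.mem_range.1 hj).le)).trans_eq ?_
    rw [Finset.sum_const, Finset.card_range, nsmul_eq_mul]
  have hSg : ∀ m, DifferentiableOn ℂ (fun x => radialSum f x₀ m x (x - x₀)) (ball x₀ (R / 2)) :=
    fun m => (hSd m).clm_apply (by fun_prop)
  have hzero : ∀ m, τ (ball x₀ (R / 2)) (fun x => radialSum f x₀ m x (x - x₀)) x₀ = 0 := fun m =>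
    map_apply_sub_eq_zero hX hτ hr (hWU.trans hU) hcont
      (fun v => (hSd m).clm_apply (differentiableOn_const v)) (hSg m) (hSb m)
  rw [← hτ.2.2.2 U _ hU hWU hUo isOpen_ball f hf x₀ hmem]
  refine tendsto_nhds_unique (hcont (fun m x => radialSum f x₀ m x (x - x₀)) f hSg
    (hd.mono hWR) fun K hK _ => ?_) (by simp only [hzero]; exact tendsto_const_nhds)
  rw [Metric.tendstoUniformlyOn_iff]
  intro ε hε
  have hlim : Tendsto (fun m : ℕ => 4 * (1 : ℝ) / (m + 1)) atTop (𝓝 0) := by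
    simpa [div_eq_mul_inv] using
      (tendsto_one_div_add_atTop_nhds_zero_nat (𝕜 := ℝ)).const_mul 4
  filter_upwards [hlim.eventually (gt_mem_nhds hε)] with m hm x hx
  have := norm_radialSum_apply_sub_le hd hM (hK hx) m
  rw [h0, sub_zero, ← dist_eq_norm] at this
  exact this.trans_lt hm

/-- For `x ∈ Ω` the map `z ↦ (τ z)(x)` on constants is a bounded linear operator. -/
lemma exists_operator (hτ : IsSheafHomO Ω τ) (hc : IsSeqContinuousSheafHomO Ω τ)
    (hΩ : IsOpen Ω) {x : X} (hx : x ∈ Ω) :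
    ∃ T : Z₁ →L[ℂ] Z₂, ∀ z, T z = τ Ω (fun _ => z) x := by
  let T₀ : Z₁ →ₗ[ℂ] Z₂ :=
    { toFun := fun z => τ Ω (fun _ => z) x
      map_add' := fun z w => hτ.2.1 Ω subset_rfl hΩ _ _ (differentiableOn_const z)
        (differentiableOn_const w) x hx
      map_smul' := fun a z => hτ.2.2.1 Ω subset_rfl hΩ _ (differentiableOn_const a) _
        (differentiableOn_const z) x hx }
  refine ⟨⟨T₀, ?_⟩, fun z => rfl⟩
  change Continuous fun z => τ Ω (fun _ => z) x
  obtain ⟨c, ρ, hxc, hcΩ, hseq⟩ := hc x hx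
  refine continuous_iff_seqContinuous.2 fun u z hu => ?_
  have h := (hseq c ρ hxc subset_rfl (fun n _ => u n) (fun _ => z)
    (fun n => differentiableOn_const _) (differentiableOn_const _)
    (fun K _ _ => hu.tendstoUniformlyOn_const K) {x} (by simpa using hxc)
    isCompact_singleton).tendsto_at rfl
  simpa only [Function.comp_def, hτ.2.2.2 Ω _ subset_rfl hcΩ hΩ isOpen_ball _ (differentiableOn_const _) x hxc]
    using h

end Sheaf

/-- A strongly continuous operator function is locally bounded, by Banach–Steinhaus along
sequences. -/
lemma exists_bound_near {X Z₁ Z₂ : Type*} [NormedAddCommGroup X]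
    [NormedAddCommGroup Z₁] [NormedSpace ℂ Z₁] [CompleteSpace Z₁]
    [NormedAddCommGroup Z₂] [NormedSpace ℂ Z₂] {T : X → Z₁ →L[ℂ] Z₂} {x₀ : X}
    (hT : ∀ z, ContinuousAt (fun x => T x z) x₀) :
    ∃ M r, 0 < r ∧ ∀ x ∈ ball x₀ r, ‖T x‖ ≤ M := by
  by_contra! hcon
  choose u hu hun using fun n : ℕ => hcon n (1 / ((n : ℝ) + 1)) (by positivity)
  have hlim : Tendsto u atTop (𝓝 x₀) := by
    rw [tendsto_iff_dist_tendsto_zero]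
    exact squeeze_zero (fun _ => dist_nonneg) (fun n => (hu n).le)
      tendsto_one_div_add_atTop_nhds_zero_nat
  obtain ⟨C, hC⟩ := banach_steinhaus (g := fun n => T (u n)) fun z => by
    obtain ⟨C, hC⟩ := ((hT z).tendsto.comp hlim).norm.bddAbove_range
    exact ⟨C, fun n => hC ⟨n, rfl⟩⟩
  obtain ⟨n, hn⟩ := exists_nat_gt C
  linarith [hC n, hun n]

/-- If `X` is a complex Banach space with a Schauder basis, `Ω ⊆ X` open, and
`τ : O^{Z₁} → O^{Z₂}` a sequentially continuous sheaf homomorphism over `Ω`, then there is a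
holomorphic operator function `T : Ω → L(Z₁,Z₂)`, unique on `Ω`, with
`(τ_U f)(x) = T(x)(f(x))` for all open `U ⊆ Ω`, all `f ∈ O(U,Z₁)` and all `x ∈ U`. -/
theorem exists_unique_operator_function_of_seqContinuous_sheafHom
    {X Z₁ Z₂ : Type*} [NormedAddCommGroup X] [NormedSpace ℂ X] [CompleteSpace X]
    [NormedAddCommGroup Z₁] [NormedSpace ℂ Z₁] [CompleteSpace Z₁]
    [NormedAddCommGroup Z₂] [NormedSpace ℂ Z₂] [CompleteSpace Z₂]
    (hX : HasSchauderBasis X) (Ω : Set X) (hΩ : IsOpen Ω)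
    (τ : Set X → (X → Z₁) → (X → Z₂))
    (hτ : IsSheafHomO Ω τ) (hc : IsSeqContinuousSheafHomO Ω τ) :
    ∃ T : X → Z₁ →L[ℂ] Z₂, DifferentiableOn ℂ T Ω ∧
      (∀ U : Set X, U ⊆ Ω → IsOpen U → ∀ f : X → Z₁, DifferentiableOn ℂ f U →
        ∀ x ∈ U, τ U f x = T x (f x)) ∧
      (∀ T' : X → Z₁ →L[ℂ] Z₂, DifferentiableOn ℂ T' Ω →
        (∀ U : Set X, U ⊆ Ω → IsOpen U → ∀ f : X → Z₁, DifferentiableOn ℂ f U →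
          ∀ x ∈ U, τ U f x = T' x (f x)) →
        ∀ x ∈ Ω, T' x = T x) := by
  choose! T hT using fun x (hx : x ∈ Ω) => exists_operator hτ hc hΩ hx
  have hTd : ∀ z, DifferentiableOn ℂ (fun x => T x z) Ω := fun z =>
    (hτ.1 Ω subset_rfl hΩ _ (differentiableOn_const z)).congr fun x hx => hT x hx z
  refine ⟨T, fun x hx => ?_, fun U hU hUo f hf x hx => ?_, fun T' _ hT' x hx => ?_⟩
  · obtain ⟨M, r, hr, hM⟩ := exists_bound_near fun z =>
      (hTd z).continuousOn.continuousAt (hΩ.mem_nhds hx)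
    obtain ⟨s, hs, hsΩ⟩ := Metric.isOpen_iff.1 hΩ x hx
    refine (differentiableAt_of_strongly (lt_min hr hs) (fun z => (hTd z).mono ?_)
      fun y hy => hM y (ball_subset_ball (min_le_left _ _) hy)).differentiableWithinAt
    exact (ball_subset_ball (min_le_right _ _)).trans hsΩ
  · -- split `f` into the constant `f x` and a function vanishing at `x`
    have h1 := hτ.2.1 U hU hUo (fun y => f y - f x) (fun _ => f x) (hf.sub_const _)
      (differentiableOn_const _) x hx
    simp only [sub_add_cancel] at h1
    rw [h1, map_eq_zero_of_apply_eq_zero hX hτ hc hU hUo (hf.sub_const _) hx (sub_self _), zero_add,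
      hT x (hU hx), hτ.2.2.2 Ω U subset_rfl hU hΩ hUo _ (differentiableOn_const _) x hx]
  · ext z
    rw [hT x hx, hT' Ω subset_rfl hΩ _ (differentiableOn_const z) x hx]
end

section
/- Let X, Z₁, Z₂ be complex Banach spaces, Ω ⊆ X open, and T : Ω → L(Z₁,Z₂) a map into the space of bounded linear operators from Z₁ to Z₂ equipped with the operator norm. If for every fixed z₁ ∈ Z₁ the function x ↦ T(x)z₁ is holomorphic on Ω (Fréchet ℂ-differentiable with values in Z₂), then T itself is holomorphic on Ω as an L(Z₁,Z₂)-valued map. -/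
open Filter Topology

/-!
The argument is pointwise in `x₀ ∈ Ω`. By the uniform boundedness principle, `T` is bounded in
operator norm by some `C` on a ball of radius `r` about `x₀`
(`exists_ball_norm_le_of_continuousAt_apply`): otherwise `‖T xₙ‖ → ∞` along some `xₙ → x₀`, although
every orbit `T xₙ z` converges. Each `x ↦ T x z` is then holomorphic and bounded by `C * ‖z‖` on
this ball, so the Schwarz lemma bounds its derivative `D z` at `x₀` by `2 * C * ‖z‖ / r` and its
first-order Taylor remainder by `4 * C * ‖z‖ * (‖x - x₀‖ / r) ^ 2`. As both bounds are
linear in `‖z‖`, the maps `D z` assemble to a continuous linear map `X →L (Z₁ →L Z₂)`, and the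
remainder of `T` itself is `O(‖x - x₀‖ ^ 2)` in operator norm.
-/

/-- Uniform boundedness: an operator-valued map which is strongly continuous at `c` is bounded in
operator norm near `c`. -/
lemma exists_ball_norm_le_of_continuousAt_apply
    {X Z₁ Z₂ : Type*} [NormedAddCommGroup X]
    [NormedAddCommGroup Z₁] [NormedSpace ℂ Z₁] [CompleteSpace Z₁]
    [NormedAddCommGroup Z₂] [NormedSpace ℂ Z₂]
    {T : X → Z₁ →L[ℂ] Z₂} {c : X} (h : ∀ z, ContinuousAt (fun x => T x z) c) :
    ∃ C : ℝ, ∃ r > 0, ∀ x ∈ Metric.ball c r, ‖T x‖ ≤ C := by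
  by_contra! hcon
  have hseq (n : ℕ) : ∃ x ∈ Metric.ball c (1 / ((n : ℝ) + 1)), (n : ℝ) < ‖T x‖ :=
    hcon n _ Nat.one_div_pos_of_nat
  choose x hx hTx using hseq
  have hlim : Tendsto x atTop (𝓝 c) := by
    rw [tendsto_iff_dist_tendsto_zero]
    exact squeeze_zero (fun _ => dist_nonneg) (fun n => (Metric.mem_ball.1 (hx n)).le)
      tendsto_one_div_add_atTop_nhds_zero_nat
  obtain ⟨C, hC⟩ := banach_steinhaus (g := fun n => T (x n)) fun z => by
    obtain ⟨C, hC⟩ := ((h z).tendsto.comp hlim).norm.bddAbove_range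
    exact ⟨C, fun n => hC ⟨n, rfl⟩⟩
  obtain ⟨n, hn⟩ := exists_nat_gt C
  linarith [hTx n, hC n]

/-- Cauchy estimate for the derivative at the centre of a ball. -/
lemma norm_fderiv_le_of_norm_le_ball
    {X Z : Type*} [NormedAddCommGroup X] [NormedSpace ℂ X]
    [NormedAddCommGroup Z] [NormedSpace ℂ Z]
    {f : X → Z} {c : X} {r M : ℝ} (hr : 0 < r) (hf : DifferentiableOn ℂ f (Metric.ball c r))
    (hM : ∀ x ∈ Metric.ball c r, ‖f x‖ ≤ M) : ‖fderiv ℂ f c‖ ≤ 2 * M / r := by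
  refine Complex.norm_fderiv_le_div_of_mapsTo_ball hf (fun x hx => ?_) hr
  rw [mem_closedBall_iff_norm]
  linarith [norm_sub_le (f x) (f c), hM x hx, hM c (Metric.mem_ball_self hr)]

/-- A bounded holomorphic function on a ball has a first-order Taylor remainder at the centre
which is quadratically small, with a constant depending only on the bound and the radius. This is
the Schwarz lemma for a function vanishing to order two at the centre. -/
lemma norm_taylor_remainder_le_of_norm_le_ball
    {X Z : Type*} [NormedAddCommGroup X] [NormedSpace ℂ X]
    [NormedAddCommGroup Z] [NormedSpace ℂ Z]
    {f : X → Z} {c : X} {r M : ℝ} (hr : 0 < r) (hf : DifferentiableOn ℂ f (Metric.ball c r))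
    (hM : ∀ x ∈ Metric.ball c r, ‖f x‖ ≤ M) {x : X} (hx : x ∈ Metric.ball c r) :
    ‖f x - f c - fderiv ℂ f c (x - c)‖ ≤ 4 * M * (‖x - c‖ / r) ^ 2 := by
  have hfc : HasFDerivAt f (fderiv ℂ f c) c :=
    (hf.differentiableAt (Metric.ball_mem_nhds c hr)).hasFDerivAt
  have hD := norm_fderiv_le_of_norm_le_ball hr hf hM
  set g : X → Z := fun y => f y - f c - fderiv ℂ f c (y - c) with hg
  have hgc : g c = 0 := by simp [hg]
  have hgd : DifferentiableOn ℂ g (Metric.ball c r) := by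
    refine (hf.sub_const _).sub (Differentiable.differentiableOn ?_)
    fun_prop
  have hmaps : Set.MapsTo g (Metric.ball c r) (Metric.closedBall (g c) (4 * M)) := by
    intro y hy
    rw [hgc, mem_closedBall_zero_iff]
    have h1 : ‖fderiv ℂ f c (y - c)‖ ≤ 2 * M / r * r :=
      (fderiv ℂ f c).le_of_opNorm_le_of_le hD (mem_ball_iff_norm.1 hy).le
    rw [div_mul_cancel₀ _ hr.ne'] at h1
    have h2 := norm_sub_le (f y - f c) (fderiv ℂ f c (y - c))
    have h3 := norm_sub_le (f y) (f c)
    have h4 := hM y hy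
    have h5 := hM c (Metric.mem_ball_self hr)
    simp only [hg]
    linarith
  have hlo : (g · - g c) =o[𝓝 c] (fun w ↦ ‖w - c‖ ^ 1) := by
    simpa [hgc, hg] using hfc.isLittleO.norm_right
  change ‖g x‖ ≤ _
  simpa [hgc, dist_eq_norm] using
    Complex.dist_le_mul_div_pow_of_mapsTo_ball_of_isLittleO hgd hmaps hlo hx

/-- If `T : Ω → L(Z₁,Z₂)` is an operator-valued map on an open subset of a complex Banach
space such that `x ↦ T(x) z₁` is holomorphic on `Ω` for every fixed `z₁ ∈ Z₁`, then `T` is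
holomorphic on `Ω` as a map into the bounded operators with the operator norm. -/
theorem differentiableOn_clm_of_apply
    {X Z₁ Z₂ : Type*} [NormedAddCommGroup X] [NormedSpace ℂ X] [CompleteSpace X]
    [NormedAddCommGroup Z₁] [NormedSpace ℂ Z₁] [CompleteSpace Z₁]
    [NormedAddCommGroup Z₂] [NormedSpace ℂ Z₂] [CompleteSpace Z₂]
    (Ω : Set X) (hΩ : IsOpen Ω) (T : X → Z₁ →L[ℂ] Z₂)
    (h : ∀ z₁ : Z₁, DifferentiableOn ℂ (fun x => T x z₁) Ω) :
    DifferentiableOn ℂ T Ω := by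
  intro c hc
  have hda (z : Z₁) : DifferentiableAt ℂ (fun x => T x z) c :=
    (h z).differentiableAt (hΩ.mem_nhds hc)
  obtain ⟨C, r₁, hr₁, hC⟩ :=
    exists_ball_norm_le_of_continuousAt_apply fun z => (hda z).continuousAt
  obtain ⟨r₂, hr₂, hsub⟩ := Metric.isOpen_iff.1 hΩ c hc
  obtain ⟨r, hr, hrr₁, hrr₂⟩ : ∃ r > 0, r ≤ r₁ ∧ r ≤ r₂ :=
    ⟨min r₁ r₂, lt_min hr₁ hr₂, min_le_left _ _, min_le_right _ _⟩
  have hdiff (z : Z₁) : DifferentiableOn ℂ (fun x => T x z) (Metric.ball c r) :=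
    (h z).mono ((Metric.ball_subset_ball hrr₂).trans hsub)
  have hbd (z : Z₁) : ∀ x ∈ Metric.ball c r, ‖T x z‖ ≤ C * ‖z‖ := fun x hx =>
    (T x).le_of_opNorm_le (hC x (Metric.ball_subset_ball hrr₁ hx)) z
  have hC0 : 0 ≤ C := (norm_nonneg _).trans (hC c (Metric.mem_ball_self hr₁))
  -- The derivative of `x ↦ T x z` at `c` depends linearly and continuously on `z`.
  let D : Z₁ →L[ℂ] X →L[ℂ] Z₂ := LinearMap.mkContinuous
    { toFun := fun z => fderiv ℂ (fun x => T x z) c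
      map_add' := fun z w => by
        simp only [map_add]
        exact fderiv_fun_add (hda z) (hda w)
      map_smul' := fun a z => by
        simp only [map_smul, RingHom.id_apply]
        exact fderiv_fun_const_smul (hda z) a }
    (2 * C / r)
    (fun z => (norm_fderiv_le_of_norm_le_ball hr (hdiff z) (hbd z)).trans_eq (by ring))
  have hrem : ∀ x ∈ Metric.ball c r,
      ‖T x - T c - D.flip (x - c)‖ ≤ 4 * C / r ^ 2 * ‖x - c‖ ^ 2 := by
    intro x hx
    refine ContinuousLinearMap.opNorm_le_bound _ (by positivity) fun z => ?_
    refine (norm_taylor_remainder_le_of_norm_le_ball hr (hdiff z) (hbd z) hx).trans_eq ?_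
    ring
  have hT : HasFDerivAt T D.flip c := by
    refine .of_isLittleO (Asymptotics.IsBigO.trans_isLittleO (g := fun x => ‖x - c‖ ^ 2) ?_ ?_)
    · refine .of_bound (4 * C / r ^ 2) ?_
      filter_upwards [Metric.ball_mem_nhds c hr] with x hx
      simpa using hrem x hx
    · exact Asymptotics.isLittleO_pow_sub_sub c one_lt_two
  exact hT.differentiableAt.differentiableWithinAt
end

section
/- Let X, Z₁, Z₂ be complex Banach spaces, B = B_X(0,1) the open unit ball of X, and let e_i ∈ X and continuous linear functionals ξ_i ∈ X* be given for i = 1,…,n. Let τ : O^{Z₁} → O^{Z₂} be a homomorphism of sheaves of germs of holomorphic functions over B (no continuity assumed). Let f ∈ O(B,Z₁) satisfy f(0) = 0, and let U be an open neighborhood of 0 in B such that the map p(x) = Σ_{i=1}^n ξ_i(x)·e_i sends U into B. Then the function g ∈ O(U,Z₁) defined by g(x) = f(p(x)) satisfies (τ_U g)(0) = 0. -/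
/-!
By Hadamard's lemma in one variable at a time, `f (y + s • e) - f y = s • Φ (y, s)` with `Φ`
holomorphic near `(0, 0)` (`exists_holomorphic_divided_difference`). Adding the summands
`ξ i x • e i` of `p x` one by one, each step changes the germ of `f ∘ p` at `0` by
`ξ i • (holomorphic germ)`; `O`-linearity sends it to a germ whose value at `0` is a multiple of
`ξ i 0 = 0`. After all summands are removed, what remains is the constant `f 0 = 0`.

The function `Φ` is the Cauchy integral of `f (y + w • e) / (w (w - s))` over a small circle in
`w`. Its holomorphy in `(y, s)` is differentiation under the integral sign
(`differentiableAt_circleIntegral_of_prod`), which needs that the Fréchet derivative of a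
holomorphic map is continuous (`continuousOn_fderiv_of_differentiableOn_complex`); this follows
from the Schwarz lemma.

A section over `U` is represented by a function on all of `X`, so it also has to be checked that
`τ U f` on `U` depends only on `f` on `U` (`IsSheafHomO.congr`).
-/

open Metric Filter Topology

/-- A holomorphic map between complex normed spaces is `C¹`. The Schwarz lemma shows first that
`f` is Lipschitz near `x₀`, and then, applied to `v ↦ f (x + v) - f (x₀ + v)`, bounds
`f' x - f' x₀`. -/
theorem continuousOn_fderiv_of_differentiableOn_complex {E F : Type*}
    [NormedAddCommGroup E] [NormedSpace ℂ E] [NormedAddCommGroup F] [NormedSpace ℂ F]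
    {f : E → F} {V : Set E} (hV : IsOpen V) (hf : DifferentiableOn ℂ f V) :
    ContinuousOn (fderiv ℂ f) V := by
  intro x₀ hx₀
  apply ContinuousAt.continuousWithinAt
  have hc : ContinuousAt f x₀ := (hf.differentiableAt (hV.mem_nhds hx₀)).continuousAt
  obtain ⟨ρ, hρ, hρV⟩ := Metric.eventually_nhds_iff_ball.1
    ((hV.eventually_mem hx₀).and (hc.eventually (ball_mem_nhds (f x₀) one_pos)))
  obtain ⟨R, hR, rfl⟩ : ∃ R > 0, ρ = 3 * R := ⟨ρ / 3, by positivity, by ring⟩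
  have hlip : ∀ p ∈ ball x₀ (2 * R), ∀ z ∈ ball p R, dist (f z) (f p) ≤ 2 / R * dist z p := by
    intro p hp z hz
    have hsub : ball p R ⊆ ball x₀ (3 * R) := by
      apply ball_subset_ball'
      rw [mem_ball] at hp
      linarith
    refine Complex.dist_le_div_mul_dist_of_mapsTo_ball
      (hf.mono fun q hq => (hρV q (hsub hq)).1) ?_ hz
    intro q hq
    have h1 := (hρV q (hsub hq)).2
    have h2 := (hρV p (hsub (mem_ball_self hR))).2
    rw [mem_closedBall]
    linarith [dist_triangle_right (f q) (f p) (f x₀)]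
  have hbound : ∀ x ∈ ball x₀ R, dist (fderiv ℂ f x) (fderiv ℂ f x₀) ≤
      4 / R / R * dist x x₀ := by
    intro x hx
    have hmem : ∀ v ∈ ball (0 : E) R, x + v ∈ V ∧ x₀ + v ∈ V := by
      intro v hv
      rw [mem_ball, dist_eq_norm] at hx
      rw [mem_ball_zero_iff] at hv
      constructor
      · refine (hρV _ ?_).1
        rw [mem_ball, dist_eq_norm, add_sub_right_comm]
        linarith [norm_add_le (x - x₀) v]
      · refine (hρV _ ?_).1
        rw [mem_ball, dist_eq_norm, add_sub_cancel_left]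
        linarith
    have hh : ∀ v ∈ ball (0 : E) R, ‖f (x + v) - f (x₀ + v)‖ ≤ 2 / R * dist x x₀ := by
      intro v hv
      rw [mem_ball_zero_iff] at hv
      rw [← dist_eq_norm]
      have := hlip (x₀ + v) (by rw [mem_ball, dist_eq_norm, add_sub_cancel_left]; linarith)
        (x + v) (by simpa using hx)
      simpa using this
    have hdx : ∀ v ∈ ball (0 : E) R, DifferentiableAt ℂ (fun v => f (x + v)) v := fun v hv =>
      DifferentiableAt.comp v (hf.differentiableAt (hV.mem_nhds (hmem v hv).1)) (by fun_prop)
    have hdx₀ : ∀ v ∈ ball (0 : E) R, DifferentiableAt ℂ (fun v => f (x₀ + v)) v := fun v hv =>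
      DifferentiableAt.comp v (hf.differentiableAt (hV.mem_nhds (hmem v hv).2)) (by fun_prop)
    have key := Complex.norm_fderiv_le_div_of_mapsTo_ball (c := (0 : E)) (R₁ := R)
      (R₂ := 4 / R * dist x x₀) (f := fun v => f (x + v) - f (x₀ + v))
      (fun v hv => ((hdx v hv).sub (hdx₀ v hv)).differentiableWithinAt) ?_ hR
    · have h0 : (0 : E) ∈ ball (0 : E) R := mem_ball_self hR
      rw [fderiv_fun_sub (hdx 0 h0) (hdx₀ 0 h0), fderiv_comp_add_left, fderiv_comp_add_left,
        add_zero, add_zero, ← dist_eq_norm] at key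
      calc _ ≤ _ := key
        _ = _ := by ring
    · intro v hv
      rw [mem_closedBall, dist_eq_norm]
      have h1 := hh v hv
      have h2 := hh 0 (mem_ball_self hR)
      calc _ ≤ _ := norm_sub_le _ _
        _ ≤ 2 / R * dist x x₀ + 2 / R * dist x x₀ := add_le_add h1 h2
        _ = _ := by ring
  rw [ContinuousAt, tendsto_iff_dist_tendsto_zero]
  refine squeeze_zero' (Eventually.of_forall fun _ => dist_nonneg)
    (eventually_of_mem (ball_mem_nhds x₀ hR) hbound) ?_
  have : Tendsto (fun x => 4 / R / R * dist x x₀) (𝓝 x₀) (𝓝 (4 / R / R * dist x₀ x₀)) :=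
    (Continuous.tendsto (by fun_prop) x₀)
  simpa using this

/-- Differentiation under a circle integral for an integrand that is jointly holomorphic near
`{x₀} × circle`. -/
theorem differentiableAt_circleIntegral_of_prod {E F : Type*}
    [NormedAddCommGroup E] [NormedSpace ℂ E] [NormedAddCommGroup F] [NormedSpace ℂ F]
    {φ : E × ℂ → F} {W : Set (E × ℂ)} (hW : IsOpen W) (hφ : DifferentiableOn ℂ φ W)
    {x₀ : E} {R : ℝ} (hR : 0 ≤ R) (hx₀ : ∀ w ∈ sphere (0 : ℂ) R, (x₀, w) ∈ W) :
    DifferentiableAt ℂ (fun x => ∮ w in C(0, R), φ (x, w)) x₀ := by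
  have hφ' := continuousOn_fderiv_of_differentiableOn_complex hW hφ
  have hK : IsCompact (sphere (0 : ℂ) R) := isCompact_sphere _ _
  have hline : ContinuousOn (fun w : ℂ => (x₀, w)) (sphere (0 : ℂ) R) := by fun_prop
  obtain ⟨C, hC⟩ := hK.exists_bound_of_continuousOn (hφ'.comp hline hx₀)
  -- The bound on `φ'` over the compact circle persists, up to `1`, for nearby parameters.
  have hev : ∀ᶠ x in 𝓝 x₀, ∀ w ∈ sphere (0 : ℂ) R,
      (x, w) ∈ W ∧ ‖fderiv ℂ φ (x, w)‖ < C + 1 := by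
    refine hK.eventually_forall_of_forall_eventually fun w hw => ?_
    have hWn := hW.mem_nhds (hx₀ w hw)
    have hcont : ContinuousAt (fun q => ‖fderiv ℂ φ q‖) (x₀, w) :=
      (hφ'.continuousAt hWn).norm
    exact (hW.eventually_mem (hx₀ w hw)).and
      (hcont.eventually (gt_mem_nhds ((hC w hw).trans_lt (lt_add_one C))))
  have hsph : ∀ θ : ℝ, circleMap 0 R θ ∈ sphere (0 : ℂ) R := fun θ =>
    circleMap_mem_sphere 0 hR θ
  have hcirc : Continuous fun θ : ℝ => circleMap (0 : ℂ) R θ := continuous_circleMap 0 R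
  have hderiv : Continuous fun θ : ℝ => deriv (circleMap (0 : ℂ) R) θ := by
    simp only [deriv_circleMap]
    fun_prop
  have hFcont : ∀ x, (∀ w ∈ sphere (0 : ℂ) R, (x, w) ∈ W) →
      Continuous fun θ : ℝ => deriv (circleMap (0 : ℂ) R) θ • φ (x, circleMap 0 R θ) :=
    fun x hx => hderiv.smul (hφ.continuousOn.comp_continuous (by fun_prop)
      fun θ => hx _ (hsph θ))
  have hF'cont : Continuous fun θ : ℝ => deriv (circleMap (0 : ℂ) R) θ •
      (fderiv ℂ φ (x₀, circleMap 0 R θ)).comp (ContinuousLinearMap.inl ℂ E ℂ) := by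
    refine hderiv.smul (Continuous.clm_comp ?_ continuous_const)
    exact hφ'.comp_continuous (by fun_prop) fun θ => hx₀ _ (hsph θ)
  have hdiff : HasFDerivAt (fun x => ∫ θ in (0 : ℝ)..2 * Real.pi,
      deriv (circleMap (0 : ℂ) R) θ • φ (x, circleMap 0 R θ))
      (∫ θ in (0 : ℝ)..2 * Real.pi, deriv (circleMap (0 : ℂ) R) θ •
        (fderiv ℂ φ (x₀, circleMap 0 R θ)).comp (ContinuousLinearMap.inl ℂ E ℂ)) x₀ := by
    refine intervalIntegral.hasFDerivAt_integral_of_dominated_of_fderiv_le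
      (F' := fun x θ => deriv (circleMap (0 : ℂ) R) θ •
        (fderiv ℂ φ (x, circleMap 0 R θ)).comp (ContinuousLinearMap.inl ℂ E ℂ))
      (bound := fun _ => R * ((C + 1) * ‖ContinuousLinearMap.inl ℂ E ℂ‖)) hev ?_ ?_ ?_ ?_ ?_ ?_
    · filter_upwards [hev] with x hx
      exact (hFcont x fun w hw => (hx w hw).1).aestronglyMeasurable
    · exact (hFcont x₀ hx₀).intervalIntegrable _ _
    · exact hF'cont.aestronglyMeasurable
    · refine Eventually.of_forall fun θ _ x hx => ?_
      rw [norm_smul]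
      have h1 : ‖deriv (circleMap (0 : ℂ) R) θ‖ = R := by
        simp [deriv_circleMap, abs_of_nonneg hR]
      rw [h1]
      refine mul_le_mul_of_nonneg_left ?_ hR
      refine (ContinuousLinearMap.opNorm_comp_le _ _).trans ?_
      exact mul_le_mul_of_nonneg_right (hx _ (hsph θ)).2.le (norm_nonneg _)
    · exact intervalIntegrable_const
    · refine Eventually.of_forall fun θ _ x hx => HasFDerivAt.const_smul ?_ _
      have h1 := (hφ.differentiableAt (hW.mem_nhds (hx _ (hsph θ)).1)).hasFDerivAt
      exact h1.comp x (hasFDerivAt_prodMk_left x (circleMap 0 R θ))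
  exact hdiff.differentiableAt

/-- The divided difference of `f` in a fixed direction `e` is jointly holomorphic in base point
and increment, including at increment `0`. -/
theorem exists_holomorphic_divided_difference {X Z : Type*}
    [NormedAddCommGroup X] [NormedSpace ℂ X]
    [NormedAddCommGroup Z] [NormedSpace ℂ Z] [CompleteSpace Z]
    {f : X → Z} {V : Set X} (hV : IsOpen V) (h0 : (0 : X) ∈ V) (hf : DifferentiableOn ℂ f V)
    (e : X) :
    ∃ (Φ : X × ℂ → Z) (N : Set (X × ℂ)), IsOpen N ∧ (0, 0) ∈ N ∧ DifferentiableOn ℂ Φ N ∧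
      ∀ q ∈ N, f (q.1 + q.2 • e) = f q.1 + q.2 • Φ q := by
  have hadd : Continuous fun q : X × ℂ => q.1 + q.2 • e := by fun_prop
  have hpre : (fun q : X × ℂ => q.1 + q.2 • e) ⁻¹' V ∈ 𝓝 ((0 : X), (0 : ℂ)) :=
    (hV.preimage hadd).mem_nhds (by simpa using h0)
  obtain ⟨ε, hε, hεV⟩ := Metric.mem_nhds_iff.1 hpre
  obtain ⟨R, hR, hRε⟩ := exists_between hε
  have hmem : ∀ y ∈ ball (0 : X) R, ∀ w ∈ closedBall (0 : ℂ) R, y + w • e ∈ V := by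
    intro y hy w hw
    refine hεV (show (y, w) ∈ ball ((0 : X), (0 : ℂ)) ε from ?_)
    rw [← ball_prod_same]
    exact ⟨ball_subset_ball hRε.le hy, closedBall_subset_ball hRε hw⟩
  let φ : (X × ℂ) × ℂ → Z := fun q => (q.2 * (q.2 - q.1.2))⁻¹ • f (q.1.1 + q.2 • e)
  let W : Set ((X × ℂ) × ℂ) :=
    {q | q.2 * (q.2 - q.1.2) ≠ 0} ∩ (fun q => q.1.1 + q.2 • e) ⁻¹' V
  have hWo : IsOpen W :=
    (isOpen_ne_fun (by fun_prop) continuous_const).inter (hV.preimage (by fun_prop))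
  have hφ : DifferentiableOn ℂ φ W := by
    rintro q ⟨hq1, hq2⟩
    refine DifferentiableAt.differentiableWithinAt (DifferentiableAt.smul ?_ ?_)
    · exact DifferentiableAt.inv (by fun_prop) hq1
    · exact DifferentiableAt.comp (f := fun q : (X × ℂ) × ℂ => q.1.1 + q.2 • e) q
        (hf.differentiableAt (hV.mem_nhds hq2)) (by fun_prop)
  have hne : ∀ s ∈ ball (0 : ℂ) R, ∀ w ∈ sphere (0 : ℂ) R, w ≠ 0 ∧ w - s ≠ 0 := by
    intro s hs w hw
    rw [mem_ball_zero_iff] at hs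
    rw [mem_sphere_zero_iff_norm] at hw
    constructor
    · rintro rfl
      simp at hw
      linarith
    · intro h
      rw [sub_eq_zero.1 h] at hw
      linarith
  refine ⟨fun q => (2 * Real.pi * Complex.I : ℂ)⁻¹ • ∮ w in C(0, R), φ (q, w),
    ball 0 R ×ˢ ball 0 R, isOpen_ball.prod isOpen_ball,
    ⟨mem_ball_self hR, mem_ball_self hR⟩, ?_, ?_⟩
  · rintro q ⟨hq1, hq2⟩
    refine DifferentiableAt.differentiableWithinAt (DifferentiableAt.const_smul ?_ _)
    refine differentiableAt_circleIntegral_of_prod hWo hφ hR.le fun w hw => ?_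
    obtain ⟨h1, h2⟩ := hne q.2 hq2 w hw
    exact ⟨mul_ne_zero h1 h2, hmem q.1 hq1 w (sphere_subset_closedBall hw)⟩
  · rintro ⟨y, s⟩ ⟨hy, hs⟩
    simp only at hy hs ⊢
    have hd : DifferentiableOn ℂ (fun w : ℂ => f (y + w • e)) (closedBall 0 R) := fun w hw =>
      (DifferentiableAt.comp (f := fun w : ℂ => y + w • e) w
        (hf.differentiableAt (hV.mem_nhds (hmem y hy w hw)))
        (by fun_prop)).differentiableWithinAt
    have hi : ∀ t ∈ ball (0 : ℂ) R,
        CircleIntegrable (fun w : ℂ => (w - t)⁻¹ • f (y + w • e)) 0 R := by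
      intro t ht
      refine ContinuousOn.circleIntegrable hR.le (ContinuousOn.smul ?_
        (hd.continuousOn.mono sphere_subset_closedBall))
      exact ContinuousOn.inv₀ (by fun_prop) fun w hw => (hne t ht w hw).2
    have h0R : (0 : ℂ) ∈ ball (0 : ℂ) R := mem_ball_self hR
    -- Partial fractions: `s / (w (w - s)) = 1 / (w - s) - 1 / w`.
    have hpf : s • (∮ w in C(0, R), φ ((y, s), w)) =
        (∮ w in C(0, R), (w - s)⁻¹ • f (y + w • e)) -
          ∮ w in C(0, R), (w - 0)⁻¹ • f (y + w • e) := by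
      rw [← circleIntegral.integral_smul, ← circleIntegral.integral_sub (hi s hs) (hi 0 h0R)]
      refine circleIntegral.integral_congr hR.le fun w hw => ?_
      obtain ⟨h1, h2⟩ := hne s hs w hw
      simp only [φ, smul_smul, ← sub_smul, sub_zero]
      congr 1
      field_simp
      ring
    have hpi : (2 * Real.pi * Complex.I : ℂ) ≠ 0 := Complex.two_pi_I_ne_zero
    rw [smul_comm, hpf, hd.circleIntegral_sub_inv_smul hs, hd.circleIntegral_sub_inv_smul h0R,
      ← smul_sub, inv_smul_smul₀ hpi]
    simp

/-- `τ U f` on `U` depends only on the restriction of `f` to `U`. If `f = g` on `U`, then `f - g`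
is unchanged by multiplication with the indicator of the complement of `U`, which is holomorphic
on `U` with value `0` there. -/
theorem IsSheafHomO.congr {X Z₁ Z₂ : Type*} [NormedAddCommGroup X] [NormedSpace ℂ X]
    [NormedAddCommGroup Z₁] [NormedSpace ℂ Z₁] [NormedAddCommGroup Z₂] [NormedSpace ℂ Z₂]
    {Ω : Set X} {τ : Set X → (X → Z₁) → (X → Z₂)} (hτ : IsSheafHomO Ω τ)
    {U : Set X} (hUΩ : U ⊆ Ω) (hU : IsOpen U) {f g : X → Z₁}
    (hg : DifferentiableOn ℂ g U) (hfg : ∀ x ∈ U, f x = g x) {x : X} (hx : x ∈ U) :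
    τ U f x = τ U g x := by
  obtain ⟨-, hadd, hsmul, -⟩ := hτ
  have hd0 : DifferentiableOn ℂ (fun y => f y - g y) U :=
    (differentiableOn_const (0 : Z₁)).congr fun y hy => by simp [hfg y hy]
  have hχ : DifferentiableOn ℂ (Uᶜ.indicator fun _ => (1 : ℂ)) U :=
    (differentiableOn_const (0 : ℂ)).congr fun y hy => by simp [hy]
  have h1 := hsmul U hUΩ hU _ hχ _ hd0 x hx
  have h2 : (fun y => Uᶜ.indicator (fun _ => (1 : ℂ)) y • (f y - g y)) = fun y => f y - g y := by
    funext y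
    by_cases hy : y ∈ U
    · simp [hfg y hy]
    · simp [hy]
  have h3 : τ U (fun y => f y - g y) x = 0 := by
    rw [h2] at h1
    simpa [hx] using h1
  have h4 := hadd U hUΩ hU _ _ hd0 hg x hx
  simpa [h3] using h4

/-- Let `τ : O^{Z₁} → O^{Z₂}` be a (not necessarily continuous) sheaf homomorphism over the
unit ball `B = B_X(0,1)`, `f ∈ O(B,Z₁)` with `f(0) = 0`, and `p(x) = ∑ᵢ ξᵢ(x)·eᵢ` a finite-rank
map sending an open neighborhood `U` of `0` into `B`. Then `g = f ∘ p ∈ O(U,Z₁)` satisfies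
`(τ_U g)(0) = 0`. -/
theorem sheafHom_vanishes_at_zero_of_finiteRank_comp
    {X Z₁ Z₂ : Type*} [NormedAddCommGroup X] [NormedSpace ℂ X] [CompleteSpace X]
    [NormedAddCommGroup Z₁] [NormedSpace ℂ Z₁] [CompleteSpace Z₁]
    [NormedAddCommGroup Z₂] [NormedSpace ℂ Z₂] [CompleteSpace Z₂]
    (n : ℕ) (e : Fin n → X) (ξ : Fin n → X →L[ℂ] ℂ)
    (τ : Set X → (X → Z₁) → (X → Z₂))
    (hτ : IsSheafHomO (ball (0 : X) 1) τ)
    (f : X → Z₁) (hf : DifferentiableOn ℂ f (ball (0 : X) 1)) (hf0 : f 0 = 0)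
    (U : Set X) (hU : IsOpen U) (hU0 : (0 : X) ∈ U) (hUB : U ⊆ ball (0 : X) 1)
    (hp : ∀ x ∈ U, (∑ i, ξ i x • e i) ∈ ball (0 : X) 1) :
    τ U (fun x => f (∑ i, ξ i x • e i)) 0 = 0 := by
  classical
  obtain ⟨-, hadd, hsmul, hres⟩ := id hτ
  have main : ∀ S : Finset (Fin n), ∀ V : Set X, IsOpen V → (0 : X) ∈ V → V ⊆ ball (0 : X) 1 →
      (∀ x ∈ V, (∑ i ∈ S, ξ i x • e i) ∈ ball (0 : X) 1) →
      τ V (fun x => f (∑ i ∈ S, ξ i x • e i)) 0 = 0 := by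
    intro S
    induction S using Finset.induction_on with
    | empty =>
      intro V hV hV0 hVB _
      have h := hsmul V hVB hV (fun _ => 0) (differentiableOn_const _) (fun _ => 0)
        (differentiableOn_const _) 0 hV0
      simpa [hf0] using h
    | insert k S hk ih =>
      intro V hV hV0 hVB hpV
      obtain ⟨Φ, N, hN, hN0, hΦ, hΦf⟩ :=
        exists_holomorphic_divided_difference isOpen_ball (mem_ball_self one_pos) hf (e k)
      have hdp : ∀ T : Finset (Fin n), Differentiable ℂ fun x : X => ∑ i ∈ T, ξ i x • e i := by
        intro T
        fun_prop
      have hdq : Differentiable ℂ fun x : X => (∑ i ∈ S, ξ i x • e i, ξ k x) :=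
        (hdp S).prodMk (ξ k).differentiable
      -- On `V'` both the smaller sum stays in the unit ball and the divided difference is defined.
      let V' : Set X := V ∩ ((fun x => ∑ i ∈ S, ξ i x • e i) ⁻¹' ball (0 : X) 1 ∩
        (fun x => (∑ i ∈ S, ξ i x • e i, ξ k x)) ⁻¹' N)
      have hV' : IsOpen V' :=
        hV.inter ((isOpen_ball.preimage (hdp S).continuous).inter (hN.preimage hdq.continuous))
      have hV'0 : (0 : X) ∈ V' := ⟨hV0, by simp, by simpa using hN0⟩
      have hV'B : V' ⊆ ball (0 : X) 1 := Set.inter_subset_left.trans hVB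
      have hdS : DifferentiableOn ℂ (fun x => f (∑ i ∈ S, ξ i x • e i)) V' :=
        hf.comp (hdp S).differentiableOn fun x hx => hx.2.1
      have hdΦ : DifferentiableOn ℂ (fun x => Φ (∑ i ∈ S, ξ i x • e i, ξ k x)) V' :=
        hΦ.comp hdq.differentiableOn fun x hx => hx.2.2
      have hdξ : DifferentiableOn ℂ (fun x => ξ k x) V' := (ξ k).differentiable.differentiableOn
      have hdξΦ : DifferentiableOn ℂ
          (fun x => ξ k x • Φ (∑ i ∈ S, ξ i x • e i, ξ k x)) V' := hdξ.smul hdΦ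
      have hrestr := hres V V' hVB Set.inter_subset_left hV hV'
        (fun x => f (∑ i ∈ insert k S, ξ i x • e i))
        (hf.comp (hdp (insert k S)).differentiableOn hpV) 0 hV'0
      have hsplit : ∀ x ∈ V', f (∑ i ∈ insert k S, ξ i x • e i) =
          f (∑ i ∈ S, ξ i x • e i) + ξ k x • Φ (∑ i ∈ S, ξ i x • e i, ξ k x) := by
        intro x hx
        rw [Finset.sum_insert hk, add_comm]
        exact hΦf _ hx.2.2
      rw [← hrestr, hτ.congr hV'B hV' (hdS.fun_add hdξΦ) hsplit hV'0,
        hadd V' hV'B hV' _ _ hdS hdξΦ 0 hV'0, hsmul V' hV'B hV' _ hdξ _ hdΦ 0 hV'0,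
        ih V' hV' hV'0 hV'B fun x hx => hx.2.1, map_zero, zero_smul, add_zero]
  exact main Finset.univ U hU hU0 hUB hp
end

section
/- Let X be a complex Banach space admitting a Schauder basis, Ω ⊆ X open, Z₁, Z₂ complex Banach spaces, and τ : O^{Z₁} → O^{Z₂} a sequentially continuous homomorphism of sheaves of germs of holomorphic functions over Ω. If U ⊆ Ω is open, f ∈ O(U,Z₁), x₀ ∈ U, and f(x₀) = 0, then (τ_U f)(x₀) = 0. -/
/-!
The proof truncates `f` along the Schauder basis and uses continuity of `τ` twice.

Write `P N x = ∑ n < N, ξ n x • e n`. By Banach–Steinhaus the `P N` are uniformly bounded, so on a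
small ball around `x₀` all the functions `f_N x = f (x₀ + P N (x - x₀))` are holomorphic, and
`f_N → f` uniformly on compact sets (`tendstoUniformlyOn_comp_truncation`). By sequential
continuity it suffices that `(τ f_N) x₀ = 0` for every `N`.

This holds by induction on `N`. The function `f_0` is the constant `f x₀ = 0`. The increment
`f_{N+1} - f_N` has the form `h (A x + s x • e) - h (A x)`, where `s x = ξ N (x - x₀)` vanishes at
`x₀`. Morally it is `s` times a holomorphic function, which `O`-linearity of `τ` sends to something
vanishing at `x₀`. Holomorphy of the quotient is not needed: Cauchy's formula writes the increment
as `s x` times a circle integral whose integrand is holomorphic in `x`, and the Riemann sums of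
that integral are holomorphic and converge uniformly on compact sets
(`exists_holomorphic_approx_of_increment`), so continuity of `τ` again gives the conclusion.
-/

open Metric Filter Topology

/-- Riemann sums (left endpoints) of a jointly continuous function converge to the integral,
uniformly for the parameter in a compact set. -/
lemma tendstoUniformlyOn_riemannSum {X Z : Type*} [PseudoMetricSpace X]
    [NormedAddCommGroup Z] [NormedSpace ℝ Z] [CompleteSpace Z]
    {K : Set X} (hK : IsCompact K) {T : ℝ} (hT : 0 < T) (Φ : X → ℝ → Z)
    (hΦ : ContinuousOn (fun p : X × ℝ => Φ p.1 p.2) (K ×ˢ Set.Icc 0 T)) :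
    TendstoUniformlyOn
      (fun (n : ℕ) x => ∑ j ∈ Finset.range (n + 1), (T / (n + 1)) • Φ x (j * (T / (n + 1))))
      (fun x => ∫ t in (0 : ℝ)..T, Φ x t) atTop K := by
  have huc := (hK.prod isCompact_Icc).uniformContinuousOn_of_continuous hΦ
  rw [Metric.uniformContinuousOn_iff] at huc
  rw [Metric.tendstoUniformlyOn_iff]
  intro ε hε
  obtain ⟨δ, hδ, H⟩ := huc (ε / (2 * T)) (by positivity)
  have hlim : Tendsto (fun n : ℕ => T / ((n : ℝ) + 1)) atTop (𝓝 0) := by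
    simpa [div_eq_mul_inv] using
      (tendsto_one_div_add_atTop_nhds_zero_nat (𝕜 := ℝ)).const_mul T
  filter_upwards [hlim.eventually (gt_mem_nhds hδ)] with n hn x hx
  set w : ℝ := T / ((n : ℝ) + 1) with hw
  have hn1 : (0 : ℝ) < n + 1 := by positivity
  have hw0 : 0 < w := by positivity
  have hwT : ((n : ℝ) + 1) * w = T := by rw [hw]; field_simp
  have hmem : ∀ j ∈ Finset.range (n + 1), ∀ t ∈ Set.Icc ((j : ℝ) * w) (((j : ℝ) + 1) * w),
      t ∈ Set.Icc 0 T := by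
    intro j hj t ht
    have hj' : (j : ℝ) + 1 ≤ n + 1 := by
      have := Finset.mem_range.1 hj
      exact_mod_cast this
    refine ⟨le_trans (by positivity) ht.1, ht.2.trans ?_⟩
    rw [← hwT]; gcongr
  have hcx : ContinuousOn (Φ x) (Set.Icc 0 T) := by
    have : ContinuousOn (fun t : ℝ => (x, t)) (Set.Icc 0 T) := by fun_prop
    exact hΦ.comp this fun t ht => ⟨hx, ht⟩
  have hint : ∀ j ∈ Finset.range (n + 1),
      IntervalIntegrable (Φ x) MeasureTheory.volume ((j : ℝ) * w) (((j : ℝ) + 1) * w) := by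
    intro j hj
    apply ContinuousOn.intervalIntegrable_of_Icc
    · nlinarith
    · exact hcx.mono (hmem j hj)
  have hsum : ∑ j ∈ Finset.range (n + 1), ∫ t in ((j : ℝ) * w)..(((j : ℝ) + 1) * w), Φ x t
      = ∫ t in (0 : ℝ)..T, Φ x t := by
    have := intervalIntegral.sum_integral_adjacent_intervals (f := Φ x)
      (μ := MeasureTheory.volume) (a := fun j : ℕ => (j : ℝ) * w) (n := n + 1) (by
        intro k hk
        simpa using hint k (Finset.mem_range.2 hk))
    simpa [hwT] using this
  rw [← hsum, dist_eq_norm, ← Finset.sum_sub_distrib]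
  calc ‖∑ j ∈ Finset.range (n + 1),
        ((∫ t in ((j : ℝ) * w)..(((j : ℝ) + 1) * w), Φ x t) - w • Φ x (j * w))‖
      ≤ ∑ j ∈ Finset.range (n + 1), ε / (2 * T) * w := by
        refine norm_sum_le_of_le _ fun j hj => ?_
        have hconst : w • Φ x (j * w)
            = ∫ t in ((j : ℝ) * w)..(((j : ℝ) + 1) * w), Φ x (j * w) := by
          rw [intervalIntegral.integral_const]; congr 1; ring
        rw [hconst, ← intervalIntegral.integral_sub (hint j hj) (by simp)]
        have hle : (j : ℝ) * w ≤ ((j : ℝ) + 1) * w := by nlinarith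
        refine (intervalIntegral.norm_integral_le_of_norm_le_const
          (C := ε / (2 * T)) fun t ht => ?_).trans (le_of_eq ?_)
        · rw [Set.uIoc_of_le hle] at ht
          rw [← dist_eq_norm]
          refine (H (x, t) ⟨hx, hmem j hj t ⟨ht.1.le, ht.2⟩⟩ (x, j * w)
            ⟨hx, hmem j hj _ ⟨le_rfl, hle⟩⟩ ?_).le
          rw [Prod.dist_eq, dist_self, max_lt_iff]
          refine ⟨hδ, ?_⟩
          rw [Real.dist_eq, abs_of_nonneg (by linarith [ht.1])]
          linarith [ht.2]
        · rw [abs_of_nonneg (by linarith)]; ring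
    _ = ε / 2 := by
        rw [Finset.sum_const, Finset.card_range, nsmul_eq_mul]
        push_cast
        rw [mul_left_comm, hwT]
        field_simp
    _ < ε := by linarith

/-- The increment `h (A x + s x • e) - h (A x)` of a holomorphic function is, near a zero `x₀` of
`s`, a locally uniform limit of products `s x • G n x` with `G n` holomorphic. The `G n` are
Riemann sums of the circle integral `(2πi)⁻¹ ∮ ((ζ - s x) ζ)⁻¹ • h (A x + ζ • e) dζ`. -/
lemma exists_holomorphic_approx_of_increment {X Z : Type*}
    [NormedAddCommGroup X] [NormedSpace ℂ X]
    [NormedAddCommGroup Z] [NormedSpace ℂ Z] [CompleteSpace Z]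
    {W : Set X} (hW : IsOpen W) {h : X → Z} (hh : DifferentiableOn ℂ h W)
    {x₀ : X} (hx₀ : x₀ ∈ W) {A : X → X} (hA : Differentiable ℂ A) (hA0 : A x₀ = x₀)
    {s : X → ℂ} (hs : Differentiable ℂ s) (hs0 : s x₀ = 0) (e : X) :
    ∃ δ > 0, ∃ G : ℕ → X → Z, (∀ n, DifferentiableOn ℂ (G n) (ball x₀ δ)) ∧
      ∀ K ⊆ ball x₀ δ, IsCompact K →
        TendstoUniformlyOn (fun n x => s x • G n x)
          (fun x => h (A x + s x • e) - h (A x)) atTop K := by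
  obtain ⟨ε, hε, hεW⟩ := Metric.isOpen_iff.1 hW x₀ hx₀
  -- `R` is small enough that translating by `ζ • e` with `‖ζ‖ ≤ R` costs less than `ε / 2`.
  set R : ℝ := ε / (2 * (‖e‖ + 1)) with hRdef
  have hR : 0 < R := by positivity
  have hRe : R * ‖e‖ < ε / 2 := by
    have : R * (‖e‖ + 1) = ε / 2 := by rw [hRdef]; field_simp
    nlinarith
  have h1 : ∀ᶠ x in 𝓝 x₀, dist (A x) x₀ < ε / 2 := by
    have : Tendsto A (𝓝 x₀) (𝓝 x₀) := by
      simpa [hA0] using hA.continuous.tendsto x₀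
    exact this.eventually (ball_mem_nhds x₀ (half_pos hε))
  have h2 : ∀ᶠ x in 𝓝 x₀, s x ∈ ball (0 : ℂ) R := by
    have : Tendsto s (𝓝 x₀) (𝓝 0) := by
      simpa [hs0] using hs.continuous.tendsto x₀
    exact this.eventually (ball_mem_nhds 0 hR)
  obtain ⟨δ, hδ, hδ'⟩ := Metric.eventually_nhds_iff_ball.1 (h1.and h2)
  have hmem : ∀ x ∈ ball x₀ δ, ∀ ζ ∈ closedBall (0 : ℂ) R, A x + ζ • e ∈ W := by
    intro x hx ζ hζ
    apply hεW
    rw [mem_ball, dist_eq_norm]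
    have e1 : A x + ζ • e - x₀ = (A x - x₀) + ζ • e := by abel
    have e2 := (hδ' x hx).1
    rw [dist_eq_norm] at e2
    have e3 : ‖ζ • e‖ ≤ R * ‖e‖ := by
      rw [norm_smul]; gcongr; simpa using hζ
    rw [e1]
    linarith [norm_add_le (A x - x₀) (ζ • e)]
  have hne : ∀ x ∈ ball x₀ δ, ∀ ζ ∈ sphere (0 : ℂ) R, ζ - s x ≠ 0 := by
    intro x hx ζ hζ h0
    have e2 := (hδ' x hx).2
    rw [sub_eq_zero] at h0
    rw [← h0, mem_ball] at e2
    exact absurd (mem_sphere.1 hζ) e2.ne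
  have hne0 : ∀ ζ ∈ sphere (0 : ℂ) R, ζ ≠ 0 := fun ζ hζ => ne_of_mem_sphere hζ hR.ne'
  have hcirc : ∀ t, circleMap 0 R t ∈ sphere (0 : ℂ) R := circleMap_mem_sphere 0 hR.le
  -- The integrand of the circle integral in the parametrization `ζ = circleMap 0 R t`.
  let g : X → ℝ → Z := fun x t => (2 * Real.pi * Complex.I : ℂ)⁻¹ •
    (deriv (circleMap 0 R) t • (((circleMap 0 R t - s x) * circleMap 0 R t)⁻¹ •
      h (A x + circleMap 0 R t • e)))
  refine ⟨δ, hδ, fun n x => ∑ j ∈ Finset.range (n + 1),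
    (2 * Real.pi / (n + 1)) • g x (j * (2 * Real.pi / (n + 1))), ?_, ?_⟩
  · intro n
    refine DifferentiableOn.fun_sum fun j _ => ?_
    refine DifferentiableOn.const_smul ?_ _
    refine DifferentiableOn.const_smul (DifferentiableOn.const_smul (DifferentiableOn.smul ?_ ?_) _) _
    · refine DifferentiableOn.inv ?_ ?_
      · exact (((differentiable_const _).sub hs).mul (differentiable_const _)).differentiableOn
      · intro x hx
        exact mul_ne_zero (hne x hx _ (hcirc _)) (hne0 _ (hcirc _))
    · refine hh.comp (hA.add (differentiable_const _)).differentiableOn ?_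
      intro x hx
      exact hmem x hx _ (sphere_subset_closedBall (hcirc _))
  · intro K hKδ hK
    have hcont : ContinuousOn (fun p : X × ℝ => s p.1 • g p.1 p.2)
        (K ×ˢ Set.Icc 0 (2 * Real.pi)) := by
      have hsc := hs.continuous
      have hAc := hA.continuous
      have hcm : Continuous (circleMap (0 : ℂ) R) := continuous_circleMap 0 R
      refine ContinuousOn.smul (by fun_prop) ?_
      refine ContinuousOn.const_smul ?_ _
      refine ContinuousOn.smul ?_ (ContinuousOn.smul ?_ ?_)
      · simp only [deriv_circleMap]
        fun_prop
      · refine ContinuousOn.inv₀ (by fun_prop) ?_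
        rintro ⟨x, t⟩ ⟨hx, -⟩
        exact mul_ne_zero (hne x (hKδ hx) _ (hcirc _)) (hne0 _ (hcirc _))
      · refine hh.continuousOn.comp (by fun_prop) ?_
        rintro ⟨x, t⟩ ⟨hx, -⟩
        exact hmem x (hKδ hx) _ (sphere_subset_closedBall (hcirc _))
    have key := tendstoUniformlyOn_riemannSum hK Real.two_pi_pos (fun x t => s x • g x t) hcont
    refine (key.congr ?_).congr_right ?_
    · refine Eventually.of_forall fun n x _ => ?_
      simp only [Finset.smul_sum]
      refine Finset.sum_congr rfl fun j _ => ?_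
      rw [smul_comm]
    · intro x hx
      have hx := hKδ hx
      have hdiff : DifferentiableOn ℂ (fun ζ : ℂ => h (A x + ζ • e)) (closedBall 0 R) :=
        hh.comp (by fun_prop) (hmem x hx)
      have hd : DiffContOnCl ℂ (fun ζ : ℂ => h (A x + ζ • e)) (ball 0 R) :=
        hdiff.diffContOnCl_ball subset_rfl
      have c1 := hd.two_pi_i_inv_smul_circleIntegral_sub_inv_smul (hδ' x hx).2
      have c0 := hd.two_pi_i_inv_smul_circleIntegral_sub_inv_smul (mem_ball_self hR)
      simp only [zero_smul, add_zero] at c0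
      have hcs : ContinuousOn (fun ζ : ℂ => h (A x + ζ • e)) (sphere 0 R) :=
        hdiff.continuousOn.mono sphere_subset_closedBall
      have i1 : CircleIntegrable (fun z => (z - s x)⁻¹ • h (A x + z • e)) 0 R := by
        refine ContinuousOn.circleIntegrable hR.le (ContinuousOn.smul ?_ hcs)
        exact ContinuousOn.inv₀ (by fun_prop) (hne x hx)
      have i0 : CircleIntegrable (fun z => (z - 0)⁻¹ • h (A x + z • e)) 0 R := by
        refine ContinuousOn.circleIntegrable hR.le (ContinuousOn.smul ?_ hcs)
        exact ContinuousOn.inv₀ (by fun_prop) (by simpa using hne0)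
      change ∫ t in (0 : ℝ)..2 * Real.pi, s x • g x t = h (A x + s x • e) - h (A x)
      rw [← c1, ← c0, ← smul_sub, ← circleIntegral.integral_sub i1 i0, circleIntegral,
        ← intervalIntegral.integral_smul]
      refine intervalIntegral.integral_congr fun t _ => ?_
      have n1 := hne x hx _ (hcirc t)
      have n0 := hne0 _ (hcirc t)
      simp only [g]
      rw [smul_comm (s x), smul_comm (s x), ← sub_smul, smul_smul (s x)]
      congr 3
      rw [sub_zero]
      field_simp
      ring

/-- Equicontinuity upgrades the pointwise convergence of the truncations `x₀ + P N (x - x₀)` to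
uniform convergence on compact sets, and this passes to the composition with `f`. -/
lemma tendstoUniformlyOn_comp_truncation {X Z : Type*}
    [NormedAddCommGroup X] [NormedSpace ℂ X] [NormedAddCommGroup Z]
    {P : ℕ → X →L[ℂ] X} {C : ℝ} (hC : ∀ N, ‖P N‖ ≤ C)
    (hP : ∀ x, Tendsto (fun N => P N x) atTop (𝓝 x))
    {W : Set X} (hW : IsOpen W) {f : X → Z} (hf : ContinuousOn f W) (x₀ : X)
    {K : Set X} (hKW : K ⊆ W) (hK : IsCompact K) :
    TendstoUniformlyOn (fun N x => f (x₀ + P N (x - x₀))) f atTop K := by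
  have hC0 : 0 ≤ C := (norm_nonneg _).trans (hC 0)
  rw [← tendstoLocallyUniformlyOn_iff_tendstoUniformlyOn_of_compact hK,
    Metric.tendstoLocallyUniformlyOn_iff]
  intro ε hε x hx
  obtain ⟨δ, hδ, H⟩ := Metric.continuousAt_iff.1
    (hf.continuousAt (hW.mem_nhds (hKW hx))) (ε / 2) (half_pos hε)
  -- For `y` in this ball `‖P N (y - x)‖ ≤ C * η < δ / 2`, uniformly in `N`.
  set η : ℝ := δ / (2 * (C + 1)) with hη
  have hη0 : 0 < η := by positivity
  have hη1 : (C + 1) * η = δ / 2 := by rw [hη]; field_simp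
  refine ⟨ball x η, mem_nhdsWithin_of_mem_nhds (ball_mem_nhds x hη0), ?_⟩
  have hev := (hP (x - x₀)).eventually (ball_mem_nhds _ (half_pos hδ))
  filter_upwards [hev] with N hN y hy
  rw [mem_ball, dist_eq_norm] at hy
  rw [dist_eq_norm] at hN
  have hy1 : dist y x < δ := by rw [dist_eq_norm]; nlinarith
  have hy2 : dist (x₀ + P N (y - x₀)) x < δ := by
    have e1 : x₀ + P N (y - x₀) - x = P N (y - x) + (P N (x - x₀) - (x - x₀)) := by
      simp only [map_sub]; abel
    have e2 : ‖P N (y - x)‖ ≤ C * η :=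
      ((P N).le_opNorm _).trans (mul_le_mul (hC N) hy.le (norm_nonneg _) hC0)
    rw [dist_eq_norm, e1]
    have := norm_add_le (P N (y - x)) (P N (x - x₀) - (x - x₀))
    nlinarith
  have t1 := H hy1
  have t2 := H hy2
  rw [dist_comm] at t2
  linarith [dist_triangle (f y) (f x) (f (x₀ + P N (y - x₀)))]

/-- If `X` is a complex Banach space with a Schauder basis, `τ : O^{Z₁} → O^{Z₂}` a
sequentially continuous sheaf homomorphism over an open `Ω ⊆ X`, `U ⊆ Ω` open,
`f ∈ O(U,Z₁)` and `f(x₀) = 0` for some `x₀ ∈ U`, then `(τ_U f)(x₀) = 0`. -/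
theorem sheafHom_vanishes_where_section_vanishes
    {X Z₁ Z₂ : Type*} [NormedAddCommGroup X] [NormedSpace ℂ X] [CompleteSpace X]
    [NormedAddCommGroup Z₁] [NormedSpace ℂ Z₁] [CompleteSpace Z₁]
    [NormedAddCommGroup Z₂] [NormedSpace ℂ Z₂] [CompleteSpace Z₂]
    (hX : HasSchauderBasis X) (Ω : Set X) (hΩ : IsOpen Ω)
    (τ : Set X → (X → Z₁) → (X → Z₂))
    (hτ : IsSheafHomO Ω τ) (hc : IsSeqContinuousSheafHomO Ω τ)
    (U : Set X) (hUΩ : U ⊆ Ω) (hU : IsOpen U)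
    (f : X → Z₁) (hf : DifferentiableOn ℂ f U)
    (x₀ : X) (hx₀ : x₀ ∈ U) (hf0 : f x₀ = 0) :
    τ U f x₀ = 0 := by
  obtain ⟨e, ξ, hbasis⟩ := hX
  obtain ⟨-, hadd, hmul, hres⟩ := hτ
  obtain ⟨c, ρ, hx₀c, hcΩ, hcont⟩ := hc x₀ (hUΩ hx₀)
  let P : ℕ → X →L[ℂ] X := fun N => ∑ n ∈ Finset.range N, (ξ n).smulRight (e n)
  have hPapp : ∀ N x, P N x = ∑ n ∈ Finset.range N, ξ n x • e n := by
    intro N x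
    simp [P]
  have hP : ∀ x, Tendsto (fun N => P N x) atTop (𝓝 x) := by
    intro x
    simpa only [hPapp] using hbasis x
  obtain ⟨C, hC⟩ : ∃ C, ∀ N, ‖P N‖ ≤ C := by
    refine banach_steinhaus fun x => ?_
    obtain ⟨M, hM⟩ := (Metric.isBounded_range_of_tendsto _ (hP x)).exists_norm_le
    exact ⟨M, fun N => hM _ ⟨N, rfl⟩⟩
  have hC0 : 0 ≤ C := (norm_nonneg _).trans (hC 0)
  obtain ⟨r', hr', hr'U⟩ := Metric.isOpen_iff.1 (hU.inter isOpen_ball) x₀ ⟨hx₀, hx₀c⟩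
  -- The radius is chosen so that every truncation maps `ball x₀ r` into `ball x₀ r'`.
  set r : ℝ := r' / (C + 1) with hr
  have hr0 : 0 < r := by positivity
  have hrr : (C + 1) * r = r' := by rw [hr]; field_simp
  have hBr' : ball x₀ r ⊆ ball x₀ r' := ball_subset_ball (by nlinarith)
  have hBU : ball x₀ r ⊆ U := hBr'.trans (hr'U.trans Set.inter_subset_left)
  have hBc : ball x₀ r ⊆ ball c ρ := hBr'.trans (hr'U.trans Set.inter_subset_right)
  have hBΩ : ball x₀ r ⊆ Ω := hBc.trans hcΩ
  have htr : ∀ N, ∀ x ∈ ball x₀ r, x₀ + P N (x - x₀) ∈ U := by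
    intro N x hx
    refine (hr'U ?_).1
    rw [mem_ball, dist_eq_norm] at hx ⊢
    have := (P N).le_of_opNorm_le (hC N) (x - x₀)
    rw [add_sub_cancel_left]
    nlinarith
  have hdtr : ∀ N, Differentiable ℂ fun x => x₀ + P N (x - x₀) := fun N => by fun_prop
  have hdiff : ∀ N, DifferentiableOn ℂ (fun x => f (x₀ + P N (x - x₀))) (ball x₀ r) :=
    fun N => hf.comp (hdtr N).differentiableOn (htr N)
  -- Continuity of `τ` evaluated at `x₀`, on subballs of `ball x₀ r` centred at `x₀`.
  have hlim : ∀ r₁, 0 < r₁ → r₁ ≤ r → ∀ (F : ℕ → X → Z₁) (g : X → Z₁),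
      (∀ n, DifferentiableOn ℂ (F n) (ball x₀ r₁)) → DifferentiableOn ℂ g (ball x₀ r₁) →
      (∀ K ⊆ ball x₀ r₁, IsCompact K → TendstoUniformlyOn F g atTop K) →
      (∀ n, τ (ball x₀ r₁) (F n) x₀ = 0) → τ (ball x₀ r₁) g x₀ = 0 := by
    intro r₁ hr₁ hr₁r F g hF hg hFg h0
    have := hcont x₀ r₁ (mem_ball_self hr₁) ((ball_subset_ball hr₁r).trans hBc) F g hF hg
      (fun K hK => hFg K hK) {x₀} (by simpa using hr₁) isCompact_singleton
    have h1 := this.tendsto_at (Set.mem_singleton x₀)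
    simp only [h0] at h1
    exact tendsto_nhds_unique h1 tendsto_const_nhds
  have hzero : ∀ N, τ (ball x₀ r) (fun x => f (x₀ + P N (x - x₀))) x₀ = 0 := by
    intro N
    induction N with
    | zero =>
      have h0 : (fun x => f (x₀ + P 0 (x - x₀))) = fun x => (0 : ℂ) • (0 : Z₁) := by
        funext x
        simp [hPapp, hf0]
      rw [h0, hmul _ hBΩ isOpen_ball (fun _ => 0) (differentiableOn_const _) (fun _ => 0)
        (differentiableOn_const _) x₀ (mem_ball_self hr0), zero_smul]
    | succ N ih =>
      have hsplit : (fun x => f (x₀ + P (N + 1) (x - x₀))) = fun x =>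
          f (x₀ + P N (x - x₀)) + (f (x₀ + P (N + 1) (x - x₀)) - f (x₀ + P N (x - x₀))) := by
        funext x; abel
      have hd : DifferentiableOn ℂ
          (fun x => f (x₀ + P (N + 1) (x - x₀)) - f (x₀ + P N (x - x₀))) (ball x₀ r) :=
        (hdiff (N + 1)).sub (hdiff N)
      rw [hsplit, hadd _ hBΩ isOpen_ball _ _ (hdiff N) hd x₀ (mem_ball_self hr0), ih, zero_add]
      have hsd : Differentiable ℂ fun x => ξ N (x - x₀) := by fun_prop
      obtain ⟨δ, hδ, G, hG, hGlim⟩ := exists_holomorphic_approx_of_increment hU hf hx₀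
        (hdtr N) (by simp) hsd (by simp) (e N)
      have hm0 : 0 < min δ r := lt_min hδ hr0
      have hmr : ball x₀ (min δ r) ⊆ ball x₀ r := ball_subset_ball (min_le_right _ _)
      have hmδ : ball x₀ (min δ r) ⊆ ball x₀ δ := ball_subset_ball (min_le_left _ _)
      rw [← hres _ _ hBΩ hmr isOpen_ball isOpen_ball _ hd x₀ (mem_ball_self hm0)]
      refine hlim _ hm0 (min_le_right _ _) (fun n x => ξ N (x - x₀) • G n x) _
        (fun n => hsd.differentiableOn.smul ((hG n).mono hmδ)) (hd.mono hmr) ?_ ?_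
      · intro K hK hKc
        refine (hGlim K (hK.trans hmδ) hKc).congr_right fun x _ => ?_
        simp only [hPapp, Finset.sum_range_succ, add_assoc]
      · intro n
        rw [hmul _ (hmr.trans hBΩ) isOpen_ball _ hsd.differentiableOn _ ((hG n).mono hmδ) x₀
          (mem_ball_self hm0)]
        simp
  rw [← hres U (ball x₀ r) hUΩ hBU hU isOpen_ball f hf x₀ (mem_ball_self hr0)]
  exact hlim r hr0 le_rfl _ f hdiff (hf.mono hBU)
    (fun K hK hKc => tendstoUniformlyOn_comp_truncation hC hP isOpen_ball
      (hf.mono hBU).continuousOn x₀ hK hKc) hzero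
end
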